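/- Let ϑ₁, ϑ₂ be Beurling weights on ℝ^d with ϑ₁ satisfying the Beurling–Domar condition, and let 1 ≤ p, q, r < ∞. Then A^{p,1,q,r}_{ϑ₁,ϑ₂}(ℝ^d) admits an approximate unit with compactly supported Fourier transforms: for every f ∈ A^{p,1,q,r}_{ϑ₁,ϑ₂}(ℝ^d) and every ε > 0 there exists h ∈ A^{p,1,q,r}_{ϑ₁,ϑ₂}(ℝ^d) such that the Fourier transform ĥ has compact support and ‖h∗f − f‖_A < ε. -/

import Mathlib

open MeasureTheory Filter Topology
open scoped ENNReal NNReal BigOperators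

noncomputable section

/-- The unit cube `α + [0,1)^d` at the integer point `α ∈ ℤ^d`. -/
def cube {d : ℕ} (α : Fin d → ℤ) : Set (Fin d → ℝ) :=
  Set.univ.pi fun i => Set.Ico (α i : ℝ) ((α i : ℝ) + 1)

/-- The weighted amalgam norm `‖f‖_{pq,ω}` of the space `(L^p_ω, ℓ^q)`. -/
def amalgamNorm {d : ℕ} (p q : ℝ) (ω : (Fin d → ℝ) → ℝ) (f : (Fin d → ℝ) → ℂ) : ℝ≥0∞ :=
  (∑' α : Fin d → ℤ,
      (eLpNorm (fun x => ω x • f x) (ENNReal.ofReal p) (volume.restrict (cube α))) ^ q) ^ (1 / q)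

/-- Membership in the weighted amalgam space `(L^p_ω, ℓ^q)`. -/
def MemAmalgam {d : ℕ} (p q : ℝ) (ω : (Fin d → ℝ) → ℝ) (f : (Fin d → ℝ) → ℂ) : Prop :=
  Measurable f ∧ amalgamNorm p q ω f < ⊤

/-- A Beurling weight: measurable, `ϑ ≥ 1` and submultiplicative. -/
def IsBeurling {d : ℕ} (ϑ : (Fin d → ℝ) → ℝ) : Prop :=
  Measurable ϑ ∧ (∀ x, 1 ≤ ϑ x) ∧ ∀ x y, ϑ (x + y) ≤ ϑ x * ϑ y

/-- The Fourier transform `f̂(ξ) = ∫ f(x) e^{-2πi⟨x,ξ⟩} dx`. -/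
def fourierT {d : ℕ} (f : (Fin d → ℝ) → ℂ) (ξ : Fin d → ℝ) : ℂ :=
  ∫ x : Fin d → ℝ,
    Complex.exp (-(2 * (Real.pi : ℂ) * Complex.I * ∑ i, (x i : ℂ) * (ξ i : ℂ))) * f x

/-- The norm of `A^{p,1,q,r}_{ϑ₁,ϑ₂}(ℝ^d)`. -/
def ANorm {d : ℕ} (p q r : ℝ) (ϑ₁ ϑ₂ : (Fin d → ℝ) → ℝ) (f : (Fin d → ℝ) → ℂ) : ℝ≥0∞ :=
  amalgamNorm p 1 ϑ₁ f + amalgamNorm q r ϑ₂ (fourierT f)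

/-- Membership in `A^{p,1,q,r}_{ϑ₁,ϑ₂}(ℝ^d)`. -/
def MemA {d : ℕ} (p q r : ℝ) (ϑ₁ ϑ₂ : (Fin d → ℝ) → ℝ) (f : (Fin d → ℝ) → ℂ) : Prop :=
  MemAmalgam p 1 ϑ₁ f ∧ MemAmalgam q r ϑ₂ (fourierT f)

/-- Convolution `(f∗g)(x) = ∫ f(x−t)g(t) dt`. -/
def convF {d : ℕ} (f g : (Fin d → ℝ) → ℂ) (x : Fin d → ℝ) : ℂ :=
  ∫ t : Fin d → ℝ, f (x - t) * g t

/-- `ϑ ≺ ϑ'` : domination of weights up to a constant. -/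
def Prec {d : ℕ} (ϑ ϑ' : (Fin d → ℝ) → ℝ) : Prop :=
  ∃ C : ℝ, 0 < C ∧ ∀ x, ϑ x ≤ C * ϑ' x

/-- The Beurling–Domar condition `∑_{n≥1} log ϑ(nx)/n² < ∞`. -/
def BeurlingDomar {d : ℕ} (ϑ : (Fin d → ℝ) → ℝ) : Prop :=
  ∀ x : Fin d → ℝ, Summable fun n : ℕ => Real.log (ϑ ((n : ℝ) • x)) / (n : ℝ) ^ 2

/-- `w` does not tend to zero as `|x| → ∞`. -/
def NotVanishingAtInfty {d : ℕ} (w : (Fin d → ℝ) → ℝ) : Prop :=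
  ∃ δ : ℝ, 0 < δ ∧ ∀ R : ℝ, 0 < R → ∃ x : Fin d → ℝ, R < ‖x‖ ∧ δ ≤ w x

end

/-! The Beurling–Domar condition is what allows a function with compactly supported Fourier
transform to decay faster than `1 / ϑ₁`: on a line, take a Schwartz function whose transform is `1`
on a long interval and multiply it by a product of powers of `sinc (2π 4⁻ʲ x)`. The `j`-th power has
enough factors to beat `ϑ₁` at `|x| ≈ 4ʲ`, and each factor averages the transform over an interval
of length `≈ 4⁻ʲ`; the condition makes the total spread finite. Tensoring gives a
window `h` on `ℝᵈ` with `ĥ = 1` near the origin.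

The dilates `h_c(x) = cᵈ h(c x)`, `c → ∞`, form the approximate unit. By Minkowski's inequality
`‖h_c ∗ f - f‖` is at most the `|h|`-average of `‖f(· - y / c) - f‖`, which tends to `0` by
dominated convergence, the majorant being integrable by the decay of `h` against `ϑ₁`. On the
Fourier side `(ĥ_c - 1) f̂` is dominated by a multiple of `f̂` and vanishes on growing balls.
-/

open scoped FourierTransform Convolution

section SpectralWindow

theorem sinc_eq_integral_cexp (y : ℝ) :
    (Real.sinc y : ℂ) =
      1 / 2 * ∫ s in (-1 : ℝ)..1, Complex.exp (((y * s : ℝ) : ℂ) * Complex.I) := by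
  rcases eq_or_ne y 0 with rfl | hy
  · norm_num
  · have hy' : (y : ℂ) ≠ 0 := by exact_mod_cast hy
    rw [intervalIntegral.integral_comp_mul_left (fun t : ℝ => Complex.exp (t * Complex.I)) hy,
      mul_neg, mul_one, integral_exp_mul_I_eq_sinc, Complex.real_smul]
    push_cast
    field_simp

theorem fourier_sinc_mul {g : ℝ → ℂ} (hg : Integrable g) (ε ξ : ℝ) :
    𝓕 (fun x => (Real.sinc (2 * Real.pi * ε * x) : ℂ) * g x) ξ =
      1 / 2 * ∫ s in (-1 : ℝ)..1, 𝓕 g (ξ - ε * s) := by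
  let F : ℝ → ℝ → ℂ := fun x s =>
    Complex.exp (((-2 * Real.pi * x * (ξ - ε * s) : ℝ) : ℂ) * Complex.I) * g x
  have hF : Integrable (Function.uncurry F) (volume.prod (volume.restrict (Set.Ioc (-1) 1))) :=
    (hg.comp_fst _).bdd_mul (c := 1) (Continuous.aestronglyMeasurable (by fun_prop))
      (ae_of_all _ fun z => (Complex.norm_exp_ofReal_mul_I _).le)
  have havg (x : ℝ) : Complex.exp (((-2 * Real.pi * x * ξ : ℝ) : ℂ) * Complex.I) •
      ((Real.sinc (2 * Real.pi * ε * x) : ℂ) * g x) = 1 / 2 * ∫ s in Set.Ioc (-1 : ℝ) 1, F x s := by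
    rw [sinc_eq_integral_cexp, intervalIntegral.integral_of_le (by norm_num), smul_eq_mul,
      mul_assoc (1 / 2 : ℂ), ← integral_mul_const, mul_left_comm, ← integral_const_mul]
    congr 2 with s
    rw [← mul_assoc, ← Complex.exp_add]
    congr 2
    push_cast
    ring
  simp_rw [Real.fourier_real_eq_integral_exp_smul, havg]
  rw [integral_const_mul, integral_integral_swap hF, intervalIntegral.integral_of_le (by norm_num)]
  simp_rw [F, smul_eq_mul]

/-- `IsSpectralWindow a b g`: the function `g` is integrable, its Fourier transform is `1` on
`[-a, a]` and vanishes outside `(-b, b)`. -/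
structure IsSpectralWindow (a b : ℝ) (g : ℝ → ℂ) : Prop where
  measurable : Measurable g
  integrable : Integrable g
  fourier_eq_one : ∀ ξ, |ξ| ≤ a → 𝓕 g ξ = 1
  fourier_eq_zero : ∀ ξ, b ≤ |ξ| → 𝓕 g ξ = 0

namespace IsSpectralWindow

variable {a b : ℝ} {g : ℝ → ℂ}

theorem mono (hg : IsSpectralWindow a b g) {a' b' : ℝ} (ha : a' ≤ a) (hb : b ≤ b') :
    IsSpectralWindow a' b' g where
  measurable := hg.measurable
  integrable := hg.integrable
  fourier_eq_one ξ hξ := hg.fourier_eq_one ξ (hξ.trans ha)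
  fourier_eq_zero ξ hξ := hg.fourier_eq_zero ξ (hb.trans hξ)

theorem sinc_mul (hg : IsSpectralWindow a b g) {ε : ℝ} (hε : 0 ≤ ε) :
    IsSpectralWindow (a - ε) (b + ε)
      fun x => (Real.sinc (2 * Real.pi * ε * x) : ℂ) * g x := by
  have hmeas : Measurable fun x => (Real.sinc (2 * Real.pi * ε * x) : ℂ) :=
    (Complex.continuous_ofReal.comp (Real.continuous_sinc.comp (by fun_prop))).measurable
  have hshift {s : ℝ} (hs : s ∈ Set.uIcc (-1 : ℝ) 1) : |ε * s| ≤ ε := by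
    rw [Set.uIcc_of_le (by norm_num)] at hs
    rw [abs_mul, abs_of_nonneg hε]
    exact mul_le_of_le_one_right hε (abs_le.2 hs)
  refine ⟨hmeas.mul hg.measurable, ?_, fun ξ hξ => ?_, fun ξ hξ => ?_⟩
  · refine hg.integrable.bdd_mul (c := 1) hmeas.aestronglyMeasurable (ae_of_all _ fun x => ?_)
    rw [Complex.norm_real]
    exact Real.abs_sinc_le_one _
  · rw [fourier_sinc_mul hg.integrable, intervalIntegral.integral_congr (g := fun _ => 1)]
    · norm_num
    · exact fun s hs => hg.fourier_eq_one _ (by linarith [abs_sub ξ (ε * s), hshift hs])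
  · rw [fourier_sinc_mul hg.integrable, intervalIntegral.integral_congr (g := fun _ => 0)]
    · simp
    · exact fun s hs => hg.fourier_eq_zero _
        (by linarith [abs_sub_abs_le_abs_sub ξ (ε * s), hshift hs])

theorem sinc_pow_mul (hg : IsSpectralWindow a b g) {ε : ℝ} (hε : 0 ≤ ε) (m : ℕ) :
    IsSpectralWindow (a - m * ε) (b + m * ε)
      fun x => ((Real.sinc (2 * Real.pi * ε * x) ^ m : ℝ) : ℂ) * g x := by
  induction m with
  | zero => simpa using hg
  | succ m ih =>
    convert ih.sinc_mul hε using 1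
    · push_cast; ring
    · push_cast; ring
    · ext x; push_cast; ring

theorem prod_sinc_pow_mul (hg : IsSpectralWindow a b g) {ε : ℕ → ℝ} (hε : ∀ j, 0 ≤ ε j)
    (m : ℕ → ℕ) (N : ℕ) :
    IsSpectralWindow (a - ∑ j ∈ Finset.range N, m j * ε j) (b + ∑ j ∈ Finset.range N, m j * ε j)
      fun x => ((∏ j ∈ Finset.range N, Real.sinc (2 * Real.pi * ε j * x) ^ m j : ℝ) : ℂ) * g x := by
  induction N with
  | zero => simpa using hg
  | succ N ih =>
    convert ih.sinc_pow_mul (hε N) (m N) using 1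
    · rw [Finset.sum_range_succ]; ring
    · rw [Finset.sum_range_succ]; ring
    · ext x; rw [Finset.prod_range_succ]; push_cast; ring

theorem of_dominated {G : ℕ → ℝ → ℂ} {bound : ℝ → ℝ} (hG : ∀ N, IsSpectralWindow a b (G N))
    (hbound : Integrable bound) (hle : ∀ N x, ‖G N x‖ ≤ bound x)
    (hlim : ∀ x, Tendsto (fun N => G N x) atTop (𝓝 (g x))) : IsSpectralWindow a b g := by
  have hmeas : Measurable g :=
    measurable_of_tendsto_metrizable (fun N => (hG N).measurable) (tendsto_pi_nhds.2 hlim)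
  have hfourier (ξ : ℝ) : Tendsto (fun N => 𝓕 (G N) ξ) atTop (𝓝 (𝓕 g ξ)) := by
    simp_rw [Real.fourier_eq]
    refine tendsto_integral_of_dominated_convergence bound (fun N => ?_) hbound (fun N => ?_) ?_
    · exact ((Real.fourierIntegral_convergent_iff ξ).2 (hG N).integrable).aestronglyMeasurable
    · exact ae_of_all _ fun x => by rw [Circle.norm_smul]; exact hle N x
    · exact ae_of_all _ fun x => (hlim x).const_smul _
  refine ⟨hmeas, ?_, fun ξ hξ => ?_, fun ξ hξ => ?_⟩
  · exact hbound.mono' hmeas.aestronglyMeasurable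
      (ae_of_all _ fun x => le_of_tendsto' (hlim x).norm fun N => hle N x)
  · refine tendsto_nhds_unique (hfourier ξ) ?_
    simp_rw [fun N => (hG N).fourier_eq_one ξ hξ, tendsto_const_nhds]
  · refine tendsto_nhds_unique (hfourier ξ) ?_
    simp_rw [fun N => (hG N).fourier_eq_zero ξ hξ, tendsto_const_nhds]

end IsSpectralWindow

theorem exists_isSpectralWindow {a b : ℝ} (ha : 0 < a) (hab : a < b) :
    ∃ (g : ℝ → ℂ) (C : ℝ), IsSpectralWindow a b g ∧ ∀ x, ‖g x‖ ≤ C / (1 + x ^ 2) := by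
  let ψ : ContDiffBump (0 : ℝ) := ⟨a, b, ha, hab⟩
  have hsupp : HasCompactSupport fun x => (ψ x : ℂ) :=
    ψ.hasCompactSupport.comp_left (g := Complex.ofReal) Complex.ofReal_zero
  have hsmooth : ContDiff ℝ ((⊤ : ℕ∞) : WithTop ℕ∞) fun x => (ψ x : ℂ) :=
    Complex.ofRealCLM.contDiff.comp ψ.contDiff
  let Ψ : SchwartzMap ℝ ℂ := hsupp.toSchwartzMap hsmooth
  let g : SchwartzMap ℝ ℂ := 𝓕⁻ Ψ
  have hg (ξ : ℝ) : 𝓕 (g : ℝ → ℂ) ξ = ψ ξ := by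
    rw [← SchwartzMap.fourier_coe, FourierTransform.fourier_fourierInv_eq]
    rfl
  obtain ⟨C₀, -, h₀⟩ := g.decay 0 0
  obtain ⟨C₂, -, h₂⟩ := g.decay 2 0
  refine ⟨g, C₀ + C₂, ⟨g.continuous.measurable, g.integrable, fun ξ hξ => ?_, fun ξ hξ => ?_⟩,
    fun x => ?_⟩
  · rw [hg, ψ.one_of_mem_closedBall (by simpa [ψ] using hξ), Complex.ofReal_one]
  · rw [hg, ψ.zero_of_le_dist (by simpa [ψ] using hξ), Complex.ofReal_zero]
  · have h₀x := h₀ x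
    have h₂x := h₂ x
    simp only [norm_iteratedFDeriv_zero, pow_zero, one_mul, Real.norm_eq_abs, sq_abs] at h₀x h₂x
    rw [le_div_iff₀ (by positivity)]
    linarith

theorem exists_tendsto_prod_range {u : ℕ → ℝ} (h0 : ∀ j, 0 ≤ u j) (h1 : ∀ j, u j ≤ 1) :
    ∃ L, Tendsto (fun N => ∏ j ∈ Finset.range N, u j) atTop (𝓝 L) ∧ 0 ≤ L ∧ L ≤ 1 ∧
      ∀ j, L ≤ u j := by
  have hnonneg (N : ℕ) : 0 ≤ ∏ j ∈ Finset.range N, u j := Finset.prod_nonneg fun j _ => h0 j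
  have hle_one (N : ℕ) : ∏ j ∈ Finset.range N, u j ≤ 1 :=
    Finset.prod_le_one (fun j _ => h0 j) fun j _ => h1 j
  have hanti : Antitone fun N => ∏ j ∈ Finset.range N, u j :=
    antitone_nat_of_succ_le fun N => by
      rw [Finset.prod_range_succ]
      exact mul_le_of_le_one_right (hnonneg N) (h1 N)
  have hlim := tendsto_atTop_ciInf hanti ⟨0, Set.forall_mem_range.2 hnonneg⟩
  refine ⟨_, hlim, ge_of_tendsto' hlim hnonneg, le_of_tendsto' hlim hle_one, fun j => ?_⟩
  calc _ ≤ ∏ i ∈ Finset.range (j + 1), u i := hanti.le_of_tendsto hlim _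
    _ = (∏ i ∈ Finset.range j, u i) * u j := Finset.prod_range_succ _ _
    _ ≤ u j := mul_le_of_le_one_left (h0 j) (hle_one j)

theorem sinc_sq_le_exp_neg_one {y : ℝ} (hy : 2 ≤ |y|) : Real.sinc y ^ 2 ≤ Real.exp (-1) := by
  have hy0 : y ≠ 0 := by rintro rfl; norm_num at hy
  have hysq : 4 ≤ y ^ 2 := by nlinarith [sq_abs y]
  have hexp : Real.exp 1 ≤ 4 := by linarith [Real.exp_one_lt_d9]
  calc Real.sinc y ^ 2 = Real.sin y ^ 2 / y ^ 2 := by rw [Real.sinc_of_ne_zero hy0, div_pow]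
    _ ≤ 1 / 4 := by gcongr; exact Real.sin_sq_le_one y
    _ ≤ Real.exp (-1) := by
      rw [Real.exp_neg, ← one_div]
      exact one_div_le_one_div_of_le (Real.exp_pos 1) hexp

theorem sinc_pow_le_exp_neg {j : ℕ} {x : ℝ} (hx : 4 ^ j ≤ |x|) (B : ℝ) :
    Real.sinc (2 * Real.pi * (1 / 4 ^ j) * x) ^ (2 * ⌈B⌉₊) ≤ Real.exp (-B) := by
  have h2 : 2 ≤ |2 * Real.pi * (1 / 4 ^ j) * x| := by
    have hx' : 1 ≤ 1 / 4 ^ j * |x| := by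
      rwa [one_div_mul_eq_div, one_le_div (by positivity)]
    rw [abs_mul, abs_of_pos (by positivity), mul_assoc]
    nlinarith [Real.pi_gt_three]
  calc Real.sinc (2 * Real.pi * (1 / 4 ^ j) * x) ^ (2 * ⌈B⌉₊)
      ≤ Real.exp (-1) ^ ⌈B⌉₊ := by
        rw [pow_mul]
        exact pow_le_pow_left₀ (sq_nonneg _) (sinc_sq_le_exp_neg_one h2) _
    _ = Real.exp (-⌈B⌉₊) := by rw [← Real.exp_nat_mul, mul_neg_one]
    _ ≤ Real.exp (-B) := Real.exp_le_exp.2 (neg_le_neg (Nat.le_ceil B))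

theorem summable_ceil_div_four_pow {B : ℕ → ℝ} (hB : ∀ j, 0 ≤ B j)
    (hs : Summable fun j => B j / 4 ^ j) :
    Summable fun j => ((2 * ⌈B j⌉₊ : ℕ) : ℝ) * (1 / 4 ^ j) := by
  have hgeom : Summable fun j : ℕ => 1 / (4 : ℝ) ^ j := by
    simpa using summable_geometric_of_lt_one (r := (1 / 4 : ℝ)) (by norm_num) (by norm_num)
  refine Summable.of_nonneg_of_le (fun j => by positivity) (fun j => ?_)
    ((hs.add hgeom).mul_left 2)
  have hceil := (Nat.ceil_lt_add_one (hB j)).le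
  calc ((2 * ⌈B j⌉₊ : ℕ) : ℝ) * (1 / 4 ^ j) ≤ 2 * (B j + 1) * (1 / 4 ^ j) := by
        push_cast; gcongr
    _ = 2 * (B j / 4 ^ j + 1 / 4 ^ j) := by ring

/-- The window is `Q * g` with `Q = ∏ sinc (2π 4⁻ʲ x) ^ (2⌈Bⱼ⌉)`. Multiplication by the `j`-th
factor averages the transform over distances at most `2⌈Bⱼ⌉ 4⁻ʲ`, so the total loss `T` is finite
and `ĝ = 1` on `[-(T + 1), T + 1]` leaves `1` on `[-1, 1]`. -/
theorem exists_isSpectralWindow_of_summable {B : ℕ → ℝ} (hB : ∀ j, 0 ≤ B j)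
    (hs : Summable fun j => B j / 4 ^ j) :
    ∃ (h : ℝ → ℂ) (R C : ℝ), IsSpectralWindow 1 R h ∧ (∀ x, ‖h x‖ ≤ C / (1 + x ^ 2)) ∧
      ∀ j : ℕ, ∀ x, 4 ^ j ≤ |x| → ‖h x‖ * Real.exp (B j) ≤ C / (1 + x ^ 2) := by
  let m : ℕ → ℕ := fun j => 2 * ⌈B j⌉₊
  let u : ℝ → ℕ → ℝ := fun x j => Real.sinc (2 * Real.pi * (1 / 4 ^ j) * x) ^ m j
  have hu0 (x : ℝ) (j : ℕ) : 0 ≤ u x j := (even_two_mul _).pow_nonneg _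
  have hu1 (x : ℝ) (j : ℕ) : u x j ≤ 1 := by
    simp only [u, m]
    rw [← (even_two_mul _).pow_abs]
    exact pow_le_one₀ (abs_nonneg _) (Real.abs_sinc_le_one _)
  choose Q hQlim hQ0 hQ1 hQu using fun x => exists_tendsto_prod_range (hu0 x) (hu1 x)
  have hsum := summable_ceil_div_four_pow hB hs
  set T := ∑' j, (m j : ℝ) * (1 / 4 ^ j)
  have hT (N : ℕ) : ∑ j ∈ Finset.range N, (m j : ℝ) * (1 / 4 ^ j) ≤ T :=
    hsum.sum_le_tsum _ fun j _ => by positivity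
  have hT0 : 0 ≤ T := tsum_nonneg fun j => by positivity
  obtain ⟨g, C, hg, hgC⟩ := exists_isSpectralWindow (a := T + 1) (b := T + 2)
    (by linarith) (by linarith)
  have hnorm (x : ℝ) : ‖(Q x : ℂ) * g x‖ = Q x * ‖g x‖ := by
    rw [norm_mul, Complex.norm_of_nonneg (hQ0 x)]
  refine ⟨fun x => Q x * g x, T + 2 + T, C, ?_, fun x => ?_, fun j x hx => ?_⟩
  · refine .of_dominated (bound := fun x => ‖g x‖) (fun N =>
      (hg.prod_sinc_pow_mul (ε := fun j => 1 / 4 ^ j) (fun j => by positivity) m N).mono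
        (by linarith [hT N]) (by linarith [hT N])) hg.integrable.norm (fun N x => ?_) fun x => ?_
    · rw [norm_mul, Complex.norm_of_nonneg (Finset.prod_nonneg fun j _ => hu0 x j)]
      exact mul_le_of_le_one_left (norm_nonneg _)
        (Finset.prod_le_one (fun j _ => hu0 x j) fun j _ => hu1 x j)
    · exact ((Complex.continuous_ofReal.tendsto _).comp (hQlim x)).mul_const _
  · rw [hnorm]
    exact (mul_le_of_le_one_left (norm_nonneg _) (hQ1 x)).trans (hgC x)
  · calc ‖(Q x : ℂ) * g x‖ * Real.exp (B j) = Q x * ‖g x‖ * Real.exp (B j) := by rw [hnorm]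
      _ ≤ Real.exp (-B j) * ‖g x‖ * Real.exp (B j) := by
        gcongr
        exact (hQu x j).trans (sinc_pow_le_exp_neg hx (B j))
      _ = ‖g x‖ := by rw [mul_right_comm, ← Real.exp_add, neg_add_cancel, Real.exp_zero, one_mul]
      _ ≤ C / (1 + x ^ 2) := hgC x

end SpectralWindow

section Weight

variable {d : ℕ} {ϑ : (Fin d → ℝ) → ℝ}

theorem IsBeurling.pos (h : IsBeurling ϑ) (x : Fin d → ℝ) : 0 < ϑ x :=
  one_pos.trans_le (h.2.1 x)

theorem IsBeurling.nsmul_le_pow (h : IsBeurling ϑ) (n : ℕ) (x : Fin d → ℝ) :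
    ϑ ((n + 1) • x) ≤ ϑ x ^ (n + 1) := by
  induction n with
  | zero => simp
  | succ n ih =>
    rw [succ_nsmul, pow_succ]
    exact (h.2.2 _ _).trans (mul_le_mul_of_nonneg_right ih (h.pos x).le)

/-- Some set `S` on which `ϑ x` and `ϑ (-x)` are bounded has positive measure, and by Steinhaus'
theorem `S - S` is a neighbourhood of the origin. -/
theorem IsBeurling.exists_le_of_norm_lt (h : IsBeurling ϑ) :
    ∃ K δ : ℝ, 0 < δ ∧ ∀ x, ‖x‖ < δ → ϑ x ≤ K := by
  let S : ℕ → Set (Fin d → ℝ) := fun n => {x | ϑ x ≤ n ∧ ϑ (-x) ≤ n}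
  have hSmeas (n : ℕ) : MeasurableSet (S n) :=
    (measurableSet_le h.1 measurable_const).inter
      (measurableSet_le (h.1.comp measurable_neg) measurable_const)
  have hScover : ⋃ n, S n = Set.univ := Set.eq_univ_of_forall fun x => by
    obtain ⟨n, hn⟩ := exists_nat_ge (max (ϑ x) (ϑ (-x)))
    exact Set.mem_iUnion.2 ⟨n, (le_max_left _ _).trans hn, (le_max_right _ _).trans hn⟩
  obtain ⟨n, hn⟩ : ∃ n, 0 < volume (S n) := by
    refine exists_measure_pos_of_not_measure_iUnion_null ?_
    rw [hScover]
    exact NeZero.ne _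
  obtain ⟨δ, hδ, hball⟩ := Metric.mem_nhds_iff.1
    (Measure.sub_mem_nhds_zero_of_addHaar_pos volume (S n) (hSmeas n) hn)
  refine ⟨n * n, δ, hδ, fun x hx => ?_⟩
  obtain ⟨a, ha, b, hb, rfl⟩ := Set.mem_sub.1 (hball (mem_ball_zero_iff.2 hx))
  rw [sub_eq_add_neg]
  exact (h.2.2 _ _).trans (mul_le_mul ha.1 hb.2 (h.pos _).le (Nat.cast_nonneg n))

theorem IsBeurling.exists_le_of_norm_le (h : IsBeurling ϑ) (R : ℝ) :
    ∃ K, ∀ x, ‖x‖ ≤ R → ϑ x ≤ K := by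
  obtain ⟨K, δ, hδ, hK⟩ := h.exists_le_of_norm_lt
  obtain ⟨n, hn⟩ := exists_nat_gt (R / δ)
  rw [div_lt_iff₀ hδ] at hn
  refine ⟨K ^ (n + 1), fun x hx => ?_⟩
  obtain ⟨y, rfl⟩ : ∃ y, x = (n + 1) • y :=
    ⟨((n + 1 : ℕ) : ℝ)⁻¹ • x, by
      rw [← Nat.cast_smul_eq_nsmul ℝ, smul_inv_smul₀ (by positivity)]⟩
  have hy : ‖y‖ < δ := by
    rw [← Nat.cast_smul_eq_nsmul ℝ, norm_smul, Real.norm_natCast] at hx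
    push_cast at hx
    by_contra! hδy
    nlinarith
  exact (h.nsmul_le_pow n y).trans (pow_le_pow_left₀ (h.pos y).le (hK y hy) _)

theorem summable_sum_Ioc {b : ℕ → ℝ} (hb : ∀ n, 0 ≤ b n) (hs : Summable b) {u : ℕ → ℕ}
    (hu : Monotone u) : Summable fun j => ∑ n ∈ Finset.Ioc (u j) (u (j + 1)), b n := by
  have hpartial (N : ℕ) : ∑ j ∈ Finset.range N, ∑ n ∈ Finset.Ioc (u j) (u (j + 1)), b n =
      ∑ n ∈ Finset.Ioc (u 0) (u N), b n := by
    induction N with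
    | zero => simp
    | succ N ih =>
      rw [Finset.sum_range_succ, ih]
      exact Finset.sum_Ioc_consecutive b (hu N.zero_le) (hu N.le_succ)
  refine summable_of_sum_range_le (fun j => Finset.sum_nonneg fun n _ => hb n)
    (c := ∑' n, b n) fun N => ?_
  rw [hpartial]
  exact hs.sum_le_tsum _ fun n _ => hb n

/-- Average `c k ≤ c n + c (n - k)` over `2 * N < n ≤ 3 * N`. -/
theorem mul_le_two_mul_sum_Ioc {c : ℤ → ℝ} (h0 : ∀ k, 0 ≤ c k) (hneg : ∀ k, c (-k) = c k)
    (hadd : ∀ k l, c (k + l) ≤ c k + c l) {k N : ℤ} (hk : |k| ≤ N) :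
    N * c k ≤ 2 * ∑ n ∈ Finset.Ioc N (4 * N), c n := by
  obtain ⟨hk₁, hk₂⟩ := abs_le.1 hk
  have hmono {a b : ℤ} (ha : N ≤ a) (hb : b ≤ 4 * N) :
      ∑ n ∈ Finset.Ioc a b, c n ≤ ∑ n ∈ Finset.Ioc N (4 * N), c n :=
    Finset.sum_le_sum_of_subset_of_nonneg (Finset.Ioc_subset_Ioc ha hb) fun n _ _ => h0 n
  have hshift : ∑ n ∈ Finset.Ioc (2 * N) (3 * N), c (n - k) =
      ∑ n ∈ Finset.Ioc (2 * N - k) (3 * N - k), c n := by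
    simp_rw [sub_eq_add_neg, ← Finset.map_add_right_Ioc, Finset.sum_map, addRightEmbedding_apply]
  have hterm (n : ℤ) : c k ≤ c n + c (n - k) := by
    calc c k = c (n + -(n - k)) := by ring_nf
      _ ≤ c n + c (n - k) := (hadd _ _).trans_eq (by rw [hneg])
  calc N * c k = ∑ _n ∈ Finset.Ioc (2 * N) (3 * N), c k := by
        rw [Finset.sum_const, nsmul_eq_mul, Int.card_Ioc, ← Int.cast_natCast,
          Int.toNat_of_nonneg (by linarith)]
        push_cast
        ring
    _ ≤ ∑ n ∈ Finset.Ioc (2 * N) (3 * N), (c n + c (n - k)) :=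
        Finset.sum_le_sum fun n _ => hterm n
    _ ≤ 2 * ∑ n ∈ Finset.Ioc N (4 * N), c n := by
        rw [Finset.sum_add_distrib, hshift, two_mul (∑ n ∈ _, c n)]
        refine add_le_add (hmono ?_ ?_) (hmono ?_ ?_) <;> linarith

theorem sum_Ioc_natCast (c : ℤ → ℝ) (a b : ℕ) :
    ∑ n ∈ Finset.Ioc (a : ℤ) b, c n = ∑ n ∈ Finset.Ioc a b, c n := by
  have hmap : Finset.Ioc (a : ℤ) b = (Finset.Ioc a b).map Nat.castEmbedding :=
    Finset.coe_injective (by simp [Nat.image_cast_int_Ioc])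
  rw [hmap, Finset.sum_map]
  rfl

theorem summable_sum_Ioc_four_pow_div {c : ℕ → ℝ} (h0 : ∀ n, 0 ≤ c n)
    (hs : Summable fun n : ℕ => c n / (n : ℝ) ^ 2) :
    Summable fun j : ℕ => (∑ n ∈ Finset.Ioc (4 ^ j) (4 ^ (j + 1)), c n) / (4 ^ j) ^ 2 := by
  refine .of_nonneg_of_le (fun j => div_nonneg (Finset.sum_nonneg fun n _ => h0 n) (by positivity))
    (fun j => ?_) ((summable_sum_Ioc (fun n => div_nonneg (h0 n) (sq_nonneg _)) hs
      (pow_right_mono₀ (show 1 ≤ 4 by norm_num))).mul_left 16)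
  rw [Finset.sum_div, Finset.mul_sum]
  refine Finset.sum_le_sum fun n hn => ?_
  obtain ⟨hlow, hup⟩ := Finset.mem_Ioc.1 hn
  have hn0 : (0 : ℝ) < n := Nat.cast_pos.2 (Nat.zero_lt_of_lt hlow)
  have hup' : (n : ℝ) ≤ 4 * 4 ^ j := by
    rw [pow_succ'] at hup
    exact_mod_cast hup
  rw [mul_div_assoc', div_le_div_iff₀ (by positivity) (by positivity)]
  calc c n * (n : ℝ) ^ 2 ≤ c n * (4 * 4 ^ j) ^ 2 := by
        gcongr
        exact h0 n
    _ = 16 * c n * (4 ^ j) ^ 2 := by ring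

theorem IsBeurling.log_add_le (h : IsBeurling ϑ) (x y : Fin d → ℝ) :
    Real.log (ϑ (x + y)) ≤ Real.log (ϑ x) + Real.log (ϑ y) := by
  rw [← Real.log_mul (h.pos x).ne' (h.pos y).ne']
  exact Real.log_le_log (h.pos _) (h.2.2 x y)

theorem IsBeurling.exists_log_smul_le (h : IsBeurling ϑ) (x : Fin d → ℝ) :
    ∃ K, 0 ≤ K ∧ ∀ s : ℝ, Real.log (ϑ (s • x)) ≤ K + Real.log (ϑ ((⌊s⌋ : ℝ) • x)) := by
  obtain ⟨K, hK⟩ := h.exists_le_of_norm_le ‖x‖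
  have hK0 : 1 ≤ K := (h.2.1 x).trans (hK x le_rfl)
  refine ⟨Real.log K, Real.log_nonneg hK0, fun s => ?_⟩
  have hfract : ‖Int.fract s • x‖ ≤ ‖x‖ := by
    rw [norm_smul, Real.norm_of_nonneg (Int.fract_nonneg s)]
    exact mul_le_of_le_one_left (norm_nonneg x) (Int.fract_lt_one s).le
  calc Real.log (ϑ (s • x)) = Real.log (ϑ (Int.fract s • x + (⌊s⌋ : ℝ) • x)) := by
        rw [← add_smul, Int.fract_add_floor]
    _ ≤ Real.log (ϑ (Int.fract s • x)) + Real.log (ϑ ((⌊s⌋ : ℝ) • x)) := h.log_add_le _ _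
    _ ≤ Real.log K + Real.log (ϑ ((⌊s⌋ : ℝ) • x)) := by
        gcongr
        · exact h.pos _
        · exact hK _ hfract

theorem IsBeurling.exists_log_intCast_smul_le (h : IsBeurling ϑ) (hBD : BeurlingDomar ϑ)
    (x : Fin d → ℝ) :
    ∃ S : ℕ → ℝ, (∀ j, 0 ≤ S j) ∧ (Summable fun j => S j / 4 ^ j) ∧
      ∀ (j : ℕ) (k : ℤ), |k| ≤ 4 ^ j → Real.log (ϑ ((k : ℝ) • x)) ≤ S j := by
  let c : ℤ → ℝ := fun k => Real.log (ϑ ((k : ℝ) • x)) + Real.log (ϑ (-((k : ℝ) • x)))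
  have hlog (y : Fin d → ℝ) : 0 ≤ Real.log (ϑ y) := Real.log_nonneg (h.2.1 y)
  have hc0 (k : ℤ) : 0 ≤ c k := add_nonneg (hlog _) (hlog _)
  have hneg (k : ℤ) : c (-k) = c k := by
    simp only [c, Int.cast_neg, neg_smul, neg_neg]
    exact add_comm _ _
  have hadd (k l : ℤ) : c (k + l) ≤ c k + c l := by
    simp only [c, Int.cast_add, add_smul, neg_add]
    linarith [h.log_add_le ((k : ℝ) • x) ((l : ℝ) • x),
      h.log_add_le (-((k : ℝ) • x)) (-((l : ℝ) • x))]
  have hsum : Summable fun n : ℕ => c n / (n : ℝ) ^ 2 :=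
    ((hBD x).add (hBD (-x))).congr fun n => by simp [c, add_div]
  refine ⟨fun j => 2 * (∑ n ∈ Finset.Ioc (4 ^ j) (4 ^ (j + 1)), c (n : ℕ)) / 4 ^ j,
    fun j => ?_, ?_, fun j k hk => ?_⟩
  · exact div_nonneg (mul_nonneg two_pos.le (Finset.sum_nonneg fun n _ => hc0 n)) (by positivity)
  · refine ((summable_sum_Ioc_four_pow_div (fun n => hc0 n) hsum).mul_left 2).congr fun j => ?_
    field_simp
  · have key := mul_le_two_mul_sum_Ioc hc0 hneg hadd (N := (4 ^ j : ℕ)) (by exact_mod_cast hk)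
    rw [show (4 * (4 ^ j : ℕ) : ℤ) = (4 ^ (j + 1) : ℕ) by push_cast; ring, sum_Ioc_natCast] at key
    push_cast at key
    rw [le_div_iff₀' (by positivity)]
    refine le_trans ?_ key
    gcongr
    exact le_add_of_nonneg_right (hlog _)

theorem IsBeurling.exists_smul_le_exp (h : IsBeurling ϑ) (hBD : BeurlingDomar ϑ)
    (x : Fin d → ℝ) :
    ∃ B : ℕ → ℝ, (∀ j, 0 ≤ B j) ∧ (Summable fun j => B j / 4 ^ j) ∧
      ∀ (j : ℕ) (s : ℝ), |s| ≤ 4 ^ j → ϑ (s • x) ≤ Real.exp (B j) := by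
  obtain ⟨K, hK0, hK⟩ := h.exists_log_smul_le x
  obtain ⟨S, hS0, hS, hle⟩ := h.exists_log_intCast_smul_le hBD x
  have hgeom : Summable fun j : ℕ => K / (4 : ℝ) ^ j := by
    simpa [div_eq_mul_inv] using
      (summable_geometric_of_lt_one (r := (4⁻¹ : ℝ)) (by norm_num) (by norm_num)).mul_left K
  refine ⟨fun j => K + S j, fun j => add_nonneg hK0 (hS0 j),
    (hgeom.add hS).congr fun j => (add_div _ _ _).symm, fun j s hs => ?_⟩
  have hfloor : |⌊s⌋| ≤ (4 : ℤ) ^ j := by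
    obtain ⟨hs₁, hs₂⟩ := abs_le.1 hs
    refine abs_le.2 ⟨Int.le_floor.2 (by exact_mod_cast hs₁), ?_⟩
    exact_mod_cast (Int.floor_le s).trans hs₂
  rw [← Real.log_le_iff_le_exp (h.pos _)]
  exact (hK s).trans (add_le_add_right (hle j _ hfloor) K)

theorem IsBeurling.exists_isSpectralWindow (h : IsBeurling ϑ) (hBD : BeurlingDomar ϑ)
    (x : Fin d → ℝ) :
    ∃ (g : ℝ → ℂ) (R C : ℝ), IsSpectralWindow 1 R g ∧
      ∀ s y, |s| ≤ |y| → ‖g y‖ * ϑ (s • x) ≤ C / (1 + y ^ 2) := by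
  obtain ⟨B, hB0, hB, hle⟩ := h.exists_smul_le_exp hBD x
  have hBsucc : Summable fun j => B (j + 1) / 4 ^ j :=
    (((summable_nat_add_iff 1).2 hB).mul_left 4).congr fun j => by rw [pow_succ]; field_simp
  obtain ⟨g, R, C, hg, hgC, hgB⟩ :=
    exists_isSpectralWindow_of_summable (fun j => hB0 (j + 1)) hBsucc
  have hC : 0 ≤ C := by simpa using (norm_nonneg _).trans (hgC 0)
  refine ⟨g, R, C * Real.exp (B 0), hg, fun s y hsy => ?_⟩
  rcases lt_or_ge |y| 1 with hy | hy
  · calc ‖g y‖ * ϑ (s • x) ≤ C / (1 + y ^ 2) * Real.exp (B 0) :=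
          mul_le_mul (hgC y) (hle 0 s (by simpa using hsy.trans hy.le)) (h.pos _).le (by positivity)
      _ = C * Real.exp (B 0) / (1 + y ^ 2) := by ring
  · obtain ⟨j, hj⟩ := exists_nat_pow_near hy (by norm_num : (1 : ℝ) < 4)
    calc ‖g y‖ * ϑ (s • x) ≤ ‖g y‖ * Real.exp (B (j + 1)) := by
          gcongr
          exact hle _ s (hsy.trans hj.2.le)
      _ ≤ C / (1 + y ^ 2) := hgB j y hj.1
      _ ≤ C * Real.exp (B 0) / (1 + y ^ 2) := by
          gcongr
          exact le_mul_of_one_le_right hC (Real.one_le_exp (hB0 0))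

end Weight

section Fourier

variable {d : ℕ} {f g : (Fin d → ℝ) → ℂ}

theorem fourierT_eq_fourier (f : (Fin d → ℝ) → ℂ) (ξ : Fin d → ℝ) :
    fourierT f ξ = 𝓕 (fun v : EuclideanSpace ℝ (Fin d) => f v.ofLp) (WithLp.toLp 2 ξ) := by
  rw [fourierT, Real.fourier_eq', ← (PiLp.volume_preserving_ofLp (Fin d)).integral_comp
    (MeasurableEquiv.toLp 2 (Fin d → ℝ)).symm.measurableEmbedding]
  congr 1 with v
  simp only [smul_eq_mul, PiLp.inner_apply, RCLike.inner_apply, conj_trivial]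
  push_cast
  congr 2
  simp_rw [mul_comm (ξ _ : ℂ)]
  ring

theorem integrable_comp_ofLp (hf : Integrable f) :
    Integrable fun v : EuclideanSpace ℝ (Fin d) => f v.ofLp :=
  (PiLp.volume_preserving_ofLp (Fin d)).integrable_comp_of_integrable hf

theorem norm_fourierT_le (f : (Fin d → ℝ) → ℂ) (ξ : Fin d → ℝ) : ‖fourierT f ξ‖ ≤ ∫ x, ‖f x‖ := by
  rw [fourierT_eq_fourier, ← (PiLp.volume_preserving_ofLp (Fin d)).integral_comp
    (MeasurableEquiv.toLp 2 (Fin d → ℝ)).symm.measurableEmbedding]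
  exact VectorFourier.norm_fourierIntegral_le_integral_norm _ _ _ _ _

theorem continuous_fourierT (hf : Integrable f) : Continuous (fourierT f) := by
  have hcont : Continuous (𝓕 fun v : EuclideanSpace ℝ (Fin d) => f v.ofLp) :=
    VectorFourier.fourierIntegral_continuous Real.continuous_fourierChar continuous_inner
      (integrable_comp_ofLp hf)
  exact (hcont.comp (PiLp.continuous_toLp 2 _)).congr fun ξ => (fourierT_eq_fourier f ξ).symm

theorem fourierT_zero (f : (Fin d → ℝ) → ℂ) : fourierT f 0 = ∫ x, f x := by
  simp [fourierT]

theorem fourierT_sub (hf : Integrable f) (hg : Integrable g) (ξ : Fin d → ℝ) :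
    fourierT (fun x => f x - g x) ξ = fourierT f ξ - fourierT g ξ := by
  simp only [fourierT_eq_fourier, Real.fourier_eq, smul_sub]
  exact integral_sub ((Real.fourierIntegral_convergent_iff _).2 (integrable_comp_ofLp hf))
    ((Real.fourierIntegral_convergent_iff _).2 (integrable_comp_ofLp hg))

theorem fourierT_prod (g : Fin d → ℝ → ℂ) (ξ : Fin d → ℝ) :
    fourierT (fun y => ∏ i, g i (y i)) ξ = ∏ i, 𝓕 (g i) (ξ i) := by
  simp_rw [fourierT, Real.fourier_real_eq_integral_exp_smul, smul_eq_mul]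
  rw [← integral_fintype_prod_volume_eq_prod]
  congr 1 with x
  rw [Finset.prod_mul_distrib, ← Complex.exp_sum, Finset.mul_sum, ← Finset.sum_neg_distrib]
  congr 2
  refine Finset.sum_congr rfl fun i _ => ?_
  push_cast
  ring

theorem convF_eq_convolution (f g : (Fin d → ℝ) → ℂ) :
    convF f g = g ⋆[ContinuousLinearMap.mul ℂ ℂ, volume] f := by
  ext x
  simp [convF, convolution, mul_comm]

theorem integrable_convF (hf : Integrable f) (hg : Integrable g) : Integrable (convF f g) := by
  rw [convF_eq_convolution]
  exact hg.integrable_convolution _ hf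

theorem fourierT_convF (hf : Integrable f) (hg : Integrable g) (ξ : Fin d → ℝ) :
    fourierT (convF f g) ξ = fourierT f ξ * fourierT g ξ := by
  have hconv : (fun v : EuclideanSpace ℝ (Fin d) => convF f g v.ofLp) =
      (fun v => g v.ofLp) ⋆[ContinuousLinearMap.mul ℂ ℂ, volume] fun v => f v.ofLp := by
    ext v
    rw [convF_eq_convolution, convolution, ← (PiLp.volume_preserving_ofLp (Fin d)).integral_comp
      (MeasurableEquiv.toLp 2 (Fin d → ℝ)).symm.measurableEmbedding]
    rfl
  rw [fourierT_eq_fourier, hconv, Real.fourier_mul_convolution_eq (integrable_comp_ofLp hg)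
    (integrable_comp_ofLp hf), fourierT_eq_fourier f, fourierT_eq_fourier g, mul_comm]

/-- The `L¹`-normalised dilate `x ↦ c ^ d * h (c x)`, whose mass concentrates at the origin as
`c → ∞`. -/
def dilate (c : ℝ) (h : (Fin d → ℝ) → ℂ) (x : Fin d → ℝ) : ℂ :=
  (c : ℂ) ^ d * h (c • x)

variable {c : ℝ}

theorem measurable_dilate (hf : Measurable f) (c : ℝ) : Measurable (dilate c f) := by
  unfold dilate
  fun_prop

theorem integrable_dilate (hc : c ≠ 0) (hf : Integrable f) : Integrable (dilate c f) :=
  (hf.comp_smul hc).const_mul _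

theorem integral_dilate (hc : 0 < c) (f : (Fin d → ℝ) → ℂ) : ∫ x, dilate c f x = ∫ x, f x := by
  have hc' : (c : ℂ) ≠ 0 := by exact_mod_cast hc.ne'
  simp_rw [dilate]
  rw [integral_const_mul, Measure.integral_comp_smul_of_nonneg volume f c (hR := hc.le),
    Complex.real_smul, ← mul_assoc]
  simp [hc']

theorem fourierT_dilate (hc : 0 < c) (f : (Fin d → ℝ) → ℂ) (ξ : Fin d → ℝ) :
    fourierT (dilate c f) ξ = fourierT f (c⁻¹ • ξ) := by
  have hc' : (c : ℂ) ≠ 0 := by exact_mod_cast hc.ne'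
  rw [fourierT]
  refine Eq.trans ?_ (integral_dilate hc _)
  congr 1 with x
  have hphase : ∑ i, ((c • x) i : ℂ) * ((c⁻¹ • ξ) i : ℂ) = ∑ i, (x i : ℂ) * (ξ i : ℂ) := by
    refine Finset.sum_congr rfl fun i _ => ?_
    simp only [Pi.smul_apply, smul_eq_mul]
    push_cast
    field_simp
  simp only [dilate, hphase]
  ring

theorem norm_fourierT_dilate_le (hc : 0 < c) (f : (Fin d → ℝ) → ℂ) (ξ : Fin d → ℝ) :
    ‖fourierT (dilate c f) ξ‖ ≤ ∫ y, ‖f y‖ :=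
  fourierT_dilate hc f ξ ▸ norm_fourierT_le f _

theorem convF_dilate (hc : 0 < c) (f g : (Fin d → ℝ) → ℂ) (x : Fin d → ℝ) :
    convF (dilate c f) g x = ∫ y, f y * g (x - c⁻¹ • y) := by
  rw [← integral_dilate hc, convF, ← integral_sub_left_eq_self _ volume x]
  congr 1 with t
  rw [dilate, dilate, smul_smul, inv_mul_cancel₀ hc.ne', one_smul, sub_sub_cancel]
  ring

end Fourier

section BandLimitedWindow

variable {d : ℕ} {ϑ : (Fin d → ℝ) → ℝ}

/-- The product kernel `∏ i, 1 / (1 + y i ^ 2)`, an integrable majorant that is nearly constant on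
unit cubes. -/
noncomputable def cauchyKernel (y : Fin d → ℝ) : ℝ :=
  ∏ i, (1 + y i ^ 2)⁻¹

theorem cauchyKernel_pos (y : Fin d → ℝ) : 0 < cauchyKernel y :=
  Finset.prod_pos fun i _ => by positivity

theorem integrable_cauchyKernel : Integrable (cauchyKernel (d := d)) :=
  Integrable.fintype_prod (f := fun (_ : Fin d) (x : ℝ) => (1 + x ^ 2)⁻¹)
    fun _ => integrable_inv_one_add_sq

theorem cauchyKernel_anti {x y : Fin d → ℝ} (h : ∀ i, |x i| ≤ |y i|) :
    cauchyKernel y ≤ cauchyKernel x :=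
  Finset.prod_le_prod (fun i _ => by positivity) fun i _ => by
    have := sq_le_sq.2 (h i)
    gcongr

theorem IsBeurling.le_mul_prod_single (h : IsBeurling ϑ) (s : Fin d → ℝ) :
    ϑ s ≤ ϑ 0 * ∏ i, ϑ (Pi.single i (s i)) := by
  have key (S : Finset (Fin d)) :
      ϑ (∑ i ∈ S, Pi.single i (s i)) ≤ ϑ 0 * ∏ i ∈ S, ϑ (Pi.single i (s i)) := by
    induction S using Finset.induction_on with
    | empty => simp
    | insert a S ha ih =>
      rw [Finset.sum_insert ha, Finset.prod_insert ha, mul_left_comm]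
      exact (h.2.2 _ _).trans (mul_le_mul_of_nonneg_left ih (h.pos _).le)
  simpa [Finset.univ_sum_single] using key Finset.univ

/-- `IsBandLimitedWindow ϑ R D h`: the Fourier transform of `h` is `1` on the unit ball and vanishes
outside the ball of radius `R`, while `h` decays so fast that its product with `ϑ`, evaluated at
any point no larger coordinatewise, is at most `D` times the Cauchy kernel. Comparing `h` and `ϑ` at
different points is what makes the bound apply to all dilates of `h` at once. -/
structure IsBandLimitedWindow (ϑ : (Fin d → ℝ) → ℝ) (R D : ℝ) (h : (Fin d → ℝ) → ℂ) : Prop where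
  measurable : Measurable h
  norm_mul_le : ∀ s y, (∀ i, |s i| ≤ |y i|) → ‖h y‖ * ϑ s ≤ D * cauchyKernel y
  fourierT_eq_one : ∀ ξ, ‖ξ‖ ≤ 1 → fourierT h ξ = 1
  fourierT_eq_zero : ∀ ξ, R < ‖ξ‖ → fourierT h ξ = 0

theorem IsBeurling.norm_prod_mul_le (hϑ : IsBeurling ϑ) {g : Fin d → ℝ → ℂ} {C : Fin d → ℝ}
    (hg : ∀ i s y, |s| ≤ |y| → ‖g i y‖ * ϑ (s • Pi.single i 1) ≤ C i / (1 + y ^ 2))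
    {s y : Fin d → ℝ} (hsy : ∀ i, |s i| ≤ |y i|) :
    ‖∏ i, g i (y i)‖ * ϑ s ≤ ϑ 0 * (∏ i, C i) * cauchyKernel y := by
  have hsingle (i : Fin d) : Pi.single i (s i) = s i • Pi.single (M := fun _ => ℝ) i 1 := by
    rw [← Pi.single_smul, smul_eq_mul, mul_one]
  calc ‖∏ i, g i (y i)‖ * ϑ s
      ≤ (∏ i, ‖g i (y i)‖) * (ϑ 0 * ∏ i, ϑ (Pi.single i (s i))) := by
        rw [norm_prod]
        gcongr
        exact hϑ.le_mul_prod_single s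
    _ = ϑ 0 * ∏ i, (‖g i (y i)‖ * ϑ (s i • Pi.single i 1)) := by
        simp_rw [hsingle, Finset.prod_mul_distrib]
        ring
    _ ≤ ϑ 0 * ∏ i, (C i / (1 + y i ^ 2)) := by
        refine mul_le_mul_of_nonneg_left (Finset.prod_le_prod (fun i _ => ?_) fun i _ => ?_)
          (hϑ.pos 0).le
        · exact mul_nonneg (norm_nonneg _) (hϑ.pos _).le
        · exact hg i _ _ (hsy i)
    _ = ϑ 0 * (∏ i, C i) * cauchyKernel y := by
        simp_rw [cauchyKernel, div_eq_mul_inv, Finset.prod_mul_distrib]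
        ring

theorem IsBeurling.exists_isBandLimitedWindow (hϑ : IsBeurling ϑ) (hBD : BeurlingDomar ϑ) :
    ∃ R D h, IsBandLimitedWindow ϑ R D h := by
  choose g R C hg hgC using fun i : Fin d => hϑ.exists_isSpectralWindow hBD (Pi.single i 1)
  refine ⟨∑ i, |R i|, ϑ 0 * ∏ i, C i, fun y => ∏ i, g i (y i), ?_,
    fun s y => hϑ.norm_prod_mul_le hgC, fun ξ hξ => ?_, fun ξ hξ => ?_⟩
  · have := fun i => (hg i).measurable
    fun_prop
  · rw [fourierT_prod]
    exact Finset.prod_eq_one fun i _ => (hg i).fourier_eq_one _ ((norm_le_pi_norm ξ i).trans hξ)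
  · obtain ⟨i, hi⟩ : ∃ i, ∑ j, |R j| < ‖ξ i‖ := by
      contrapose! hξ
      exact (pi_norm_le_iff_of_nonneg (by positivity)).2 hξ
    have hRi : |R i| ≤ ∑ j, |R j| :=
      Finset.single_le_sum (f := fun j => |R j|) (fun j _ => abs_nonneg _) (Finset.mem_univ i)
    rw [fourierT_prod]
    exact Finset.prod_eq_zero (Finset.mem_univ i)
      ((hg i).fourier_eq_zero _ ((le_abs_self _).trans (hRi.trans hi.le)))

namespace IsBandLimitedWindow

variable {R D c : ℝ} {h : (Fin d → ℝ) → ℂ}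

theorem integrable (hϑ : ∀ x, 1 ≤ ϑ x) (hh : IsBandLimitedWindow ϑ R D h) : Integrable h :=
  (integrable_cauchyKernel.const_mul D).mono' hh.measurable.aestronglyMeasurable <|
    ae_of_all _ fun y => (le_mul_of_one_le_right (norm_nonneg _) (hϑ y)).trans
      (hh.norm_mul_le y y fun _ => le_rfl)

theorem integral_eq_one (hh : IsBandLimitedWindow ϑ R D h) : ∫ x, h x = 1 := by
  rw [← fourierT_zero]
  exact hh.fourierT_eq_one 0 (by simp)

theorem fourierT_dilate_eq_one (hh : IsBandLimitedWindow ϑ R D h) (hc : 0 < c) {ξ : Fin d → ℝ}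
    (hξ : ‖ξ‖ ≤ c) : fourierT (dilate c h) ξ = 1 := by
  rw [fourierT_dilate hc]
  refine hh.fourierT_eq_one _ ?_
  rwa [norm_smul, norm_inv, Real.norm_of_nonneg hc.le, inv_mul_le_one₀ hc]

theorem fourierT_dilate_eq_zero (hh : IsBandLimitedWindow ϑ R D h) (hc : 0 < c) {ξ : Fin d → ℝ}
    (hξ : c * R < ‖ξ‖) : fourierT (dilate c h) ξ = 0 := by
  rw [fourierT_dilate hc]
  refine hh.fourierT_eq_zero _ ?_
  rwa [norm_smul, norm_inv, Real.norm_of_nonneg hc.le, lt_inv_mul_iff₀ hc]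

theorem bound_nonneg (hϑ : ∀ x, 0 ≤ ϑ x) (hh : IsBandLimitedWindow ϑ R D h) : 0 ≤ D :=
  nonneg_of_mul_nonneg_left
    ((mul_nonneg (norm_nonneg _) (hϑ 0)).trans (hh.norm_mul_le 0 0 fun _ => le_rfl))
    (cauchyKernel_pos 0)

theorem norm_smul_dilate_le (hϑ : ∀ x, 0 ≤ ϑ x) (hh : IsBandLimitedWindow ϑ R D h)
    (hc : 1 ≤ c) (x : Fin d → ℝ) : ‖ϑ x • dilate c h x‖ ≤ c ^ d * D * cauchyKernel x := by
  have hc0 : 0 ≤ c := zero_le_one.trans hc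
  have hD : 0 ≤ D := hh.bound_nonneg hϑ
  have hx (i : Fin d) : |x i| ≤ |(c • x) i| := by
    rw [Pi.smul_apply, smul_eq_mul, abs_mul, abs_of_nonneg hc0]
    exact le_mul_of_one_le_left (abs_nonneg _) hc
  rw [dilate, norm_smul, norm_mul, norm_pow, Complex.norm_of_nonneg hc0,
    Real.norm_of_nonneg (hϑ x)]
  calc ϑ x * (c ^ d * ‖h (c • x)‖) = c ^ d * (‖h (c • x)‖ * ϑ x) := by ring
    _ ≤ c ^ d * (D * cauchyKernel (c • x)) :=
        mul_le_mul_of_nonneg_left (hh.norm_mul_le _ _ hx) (by positivity)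
    _ ≤ c ^ d * (D * cauchyKernel x) := by
        gcongr
        exact cauchyKernel_anti hx
    _ = c ^ d * D * cauchyKernel x := by ring

end IsBandLimitedWindow

end BandLimitedWindow

section Cube

variable {d : ℕ} {α : Fin d → ℤ} {x y : Fin d → ℝ}

theorem mem_cube : x ∈ cube α ↔ ∀ i, ⌊x i⌋ = α i := by
  simp [cube, Int.floor_eq_iff]

theorem measurableSet_cube (α : Fin d → ℤ) : MeasurableSet (cube α) :=
  MeasurableSet.univ_pi fun _ => measurableSet_Ico

theorem iUnion_cube : ⋃ α : Fin d → ℤ, cube α = Set.univ :=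
  Set.eq_univ_of_forall fun x => Set.mem_iUnion.2 ⟨fun i => ⌊x i⌋, mem_cube.2 fun _ => rfl⟩

theorem pairwise_disjoint_cube : Pairwise (Function.onFun Disjoint (cube (d := d))) := by
  refine fun α β hne => Set.disjoint_left.2 fun x hα hβ => hne ?_
  ext i
  rw [← mem_cube.1 hα i, mem_cube.1 hβ i]

theorem lintegral_eq_tsum_cube (F : (Fin d → ℝ) → ℝ≥0∞) :
    ∫⁻ x, F x = ∑' α : Fin d → ℤ, ∫⁻ x in cube α, F x := by
  rw [← lintegral_iUnion measurableSet_cube pairwise_disjoint_cube, iUnion_cube,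
    Measure.restrict_univ]

instance isProbabilityMeasure_restrict_cube (α : Fin d → ℤ) :
    IsProbabilityMeasure ((volume : Measure (Fin d → ℝ)).restrict (cube α)) :=
  ⟨by simp [cube, volume_pi_pi]⟩

theorem norm_sub_intCast_le_of_mem_cube (hx : x ∈ cube α) : ‖x - fun i => (α i : ℝ)‖ ≤ 1 := by
  refine (pi_norm_le_iff_of_nonneg zero_le_one).2 fun i => ?_
  rw [Pi.sub_apply, ← mem_cube.1 hx i, Int.self_sub_floor, Real.norm_of_nonneg (Int.fract_nonneg _)]
  exact (Int.fract_lt_one _).le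

theorem norm_intCast_pi (α : Fin d → ℤ) : ‖fun i => (α i : ℝ)‖ = ‖α‖ := by
  have hcoord (n : ℤ) : ‖(n : ℝ)‖₊ = ‖n‖₊ := NNReal.eq (Int.norm_cast_real n)
  simp only [Pi.norm_def, hcoord]

theorem norm_le_of_mem_cube (hx : x ∈ cube α) : ‖x‖ ≤ ‖α‖ + 1 := by
  rw [← norm_intCast_pi]
  exact (norm_le_norm_add_norm_sub' _ _).trans
    (add_le_add_right (norm_sub_intCast_le_of_mem_cube hx) _)

theorem norm_index_le_of_mem_cube (hx : x ∈ cube α) : ‖α‖ ≤ ‖x‖ + 1 := by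
  rw [← norm_intCast_pi]
  exact (norm_le_norm_add_norm_sub _ _).trans
    (add_le_add_right (norm_sub_intCast_le_of_mem_cube hx) _)

theorem exists_mem_Icc_sub_mem_cube (hx : x ∈ cube α) (t : Fin d → ℝ) :
    ∃ γ ∈ Finset.Icc (fun i => ⌊t i⌋) (fun i => ⌊t i⌋ + 1), x - t ∈ cube (α - γ) := by
  refine ⟨fun i => α i - ⌊x i - t i⌋, Finset.mem_Icc.2 ⟨fun i => ?_, fun i => ?_⟩,
    mem_cube.2 fun i => by simp⟩
  all_goals
    have hxi := mem_cube.1 hx i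
    have hsub := Int.le_floor_add (x i - t i) (t i)
    have hsub' := Int.le_floor_add_floor (x i - t i) (t i)
    rw [sub_add_cancel] at hsub hsub'
    dsimp only
    omega

theorem cauchyKernel_le_of_mem_cube (hx : x ∈ cube α) (hy : y ∈ cube α) :
    cauchyKernel x ≤ 3 ^ d * cauchyKernel y := by
  have h3 : (3 : ℝ) ^ d = ∏ _i : Fin d, 3 := by simp
  rw [cauchyKernel, cauchyKernel, h3, ← Finset.prod_mul_distrib]
  refine Finset.prod_le_prod (fun i _ => by positivity) fun i _ => ?_
  have hxy : |x i - y i| < 1 :=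
    Int.abs_sub_lt_one_of_floor_eq_floor ((mem_cube.1 hx i).trans (mem_cube.1 hy i).symm)
  rw [← div_eq_mul_inv, le_div_iff₀ (by positivity), inv_mul_le_iff₀ (by positivity)]
  nlinarith [sq_nonneg (x i + (x i - y i)), (sq_lt_one_iff_abs_lt_one _).2 hxy]

end Cube

section LpSeminorm

variable {X E ι : Type*} [MeasurableSpace X] [NormedAddCommGroup E]

theorem eLpNorm_ofReal_eq_lintegral {p : ℝ} (hp : 0 < p) (g : X → E) (μ : Measure X) :
    eLpNorm g (ENNReal.ofReal p) μ = (∫⁻ x, ‖g x‖ₑ ^ p ∂μ) ^ (1 / p) := by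
  have := eLpNorm_nnreal_eq_lintegral (f := g) (μ := μ) (Real.toNNReal_pos.2 hp).ne'
  rwa [Real.coe_toNNReal _ hp.le] at this

theorem rpow_tsum_le_tsum_rpow (a : ι → ℝ≥0∞) {s : ℝ} (hs₀ : 0 < s) (hs₁ : s ≤ 1) :
    (∑' i, a i) ^ s ≤ ∑' i, a i ^ s :=
  le_of_tendsto' ((ENNReal.continuous_rpow_const.tendsto _).comp ENNReal.summable.hasSum)
    fun t => (Finset.le_sum_of_subadditive (· ^ s) (ENNReal.zero_rpow_of_pos hs₀).le
      (fun a b => ENNReal.rpow_add_le_add_rpow a b hs₀.le hs₁) t a).trans (ENNReal.sum_le_tsum t)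

theorem eLpNorm_restrict_le_tsum [Countable ι] {μ : Measure X} {p : ℝ} (hp : 1 ≤ p) (g : X → E)
    {t : Set X} {s : ι → Set X} (hts : t ⊆ ⋃ i, s i) :
    eLpNorm g (ENNReal.ofReal p) (μ.restrict t) ≤
      ∑' i, eLpNorm g (ENNReal.ofReal p) (μ.restrict (s i)) := by
  have hp₀ : 0 < p := zero_lt_one.trans_le hp
  simp only [eLpNorm_ofReal_eq_lintegral hp₀]
  calc (∫⁻ x in t, ‖g x‖ₑ ^ p ∂μ) ^ (1 / p)
      ≤ (∑' i, ∫⁻ x in s i, ‖g x‖ₑ ^ p ∂μ) ^ (1 / p) := by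
        gcongr
        exact (lintegral_mono_set hts).trans (lintegral_iUnion_le _ _)
    _ ≤ ∑' i, (∫⁻ x in s i, ‖g x‖ₑ ^ p ∂μ) ^ (1 / p) :=
        rpow_tsum_le_tsum_rpow _ (by positivity) ((div_le_one hp₀).2 hp)

end LpSeminorm

section CubeNorm

variable {d : ℕ}

/-- The local contribution of `α + [0,1)^d` to the weighted amalgam norm, that is
`‖f·ω‖_{L^p(α+[0,1)^d)}`. -/
noncomputable def cubeNorm (p : ℝ) (ω : (Fin d → ℝ) → ℝ) (f : (Fin d → ℝ) → ℂ)
    (α : Fin d → ℤ) : ℝ≥0∞ :=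
  eLpNorm (fun x => ω x • f x) (ENNReal.ofReal p) (volume.restrict (cube α))

variable {p p' : ℝ} {ω : (Fin d → ℝ) → ℝ} {f g : (Fin d → ℝ) → ℂ} {α : Fin d → ℤ}

theorem cubeNorm_le_ofReal {C : ℝ} (hC : ∀ x ∈ cube α, ‖ω x • f x‖ ≤ C) :
    cubeNorm p ω f α ≤ ENNReal.ofReal C :=
  (eLpNorm_le_of_ae_bound (ae_restrict_of_forall_mem (measurableSet_cube α) hC)).trans (by simp)

theorem cubeNorm_eq_zero (hf : ∀ x ∈ cube α, f x = 0) : cubeNorm p ω f α = 0 := by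
  simpa using cubeNorm_le_ofReal (p := p) (ω := ω) (C := 0) fun x hx => by simp [hf x hx]

theorem cubeNorm_le_mul {C : ℝ} (hC : ∀ x ∈ cube α, ‖f x‖ ≤ C * ‖g x‖) :
    cubeNorm p ω f α ≤ ENNReal.ofReal C * cubeNorm p ω g α := by
  refine eLpNorm_le_mul_eLpNorm_of_ae_le_mul
    (ae_restrict_of_forall_mem (measurableSet_cube α) fun x hx => ?_) _
  rw [norm_smul, norm_smul, mul_left_comm]
  exact mul_le_mul_of_nonneg_left (hC x hx) (norm_nonneg _)

theorem cubeNorm_le_mul_eLpNorm {K : ℝ} (hK : ∀ x ∈ cube α, ‖ω x‖ ≤ K) :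
    cubeNorm p ω f α ≤ ENNReal.ofReal K * eLpNorm f (ENNReal.ofReal p) volume := by
  refine (eLpNorm_le_mul_eLpNorm_of_ae_le_mul
    (ae_restrict_of_forall_mem (measurableSet_cube α) fun x hx => ?_) _).trans
    (mul_le_mul_right (eLpNorm_mono_measure _ Measure.restrict_le_self) _)
  rw [norm_smul]
  exact mul_le_mul_of_nonneg_right (hK x hx) (norm_nonneg _)

theorem cubeNorm_sub_le (hp : 1 ≤ p) (hω : Measurable ω) (hf : Measurable f) (hg : Measurable g) :
    cubeNorm p ω (fun x => f x - g x) α ≤ cubeNorm p ω f α + cubeNorm p ω g α := by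
  simp only [cubeNorm, smul_sub]
  exact eLpNorm_sub_le (hω.smul hf).aestronglyMeasurable (hω.smul hg).aestronglyMeasurable
    (ENNReal.one_le_ofReal.2 hp)

theorem cubeNorm_mono_exponent (hpp' : p ≤ p') (hω : Measurable ω) (hf : Measurable f) :
    cubeNorm p ω f α ≤ cubeNorm p' ω f α :=
  eLpNorm_le_eLpNorm_of_exponent_le (ENNReal.ofReal_le_ofReal hpp')
    (hω.smul hf).aestronglyMeasurable

theorem eLpNorm_comp_sub_restrict_preimage {E : Type*} [NormedAddCommGroup E]
    (p : ℝ≥0∞) (g : (Fin d → ℝ) → E) (t : Fin d → ℝ) {s : Set (Fin d → ℝ)} (hs : MeasurableSet s) :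
    eLpNorm (fun x => g (x - t)) p (volume.restrict ((· - t) ⁻¹' s)) =
      eLpNorm g p (volume.restrict s) := by
  rw [← ((measurePreserving_sub_right volume t).restrict_preimage hs).map_eq]
  exact ((MeasurableEquiv.subRight t).measurableEmbedding.eLpNorm_map_measure).symm

theorem IsBeurling.cubeNorm_translate_le (hω : IsBeurling ω) (hp : 1 ≤ p) (f : (Fin d → ℝ) → ℂ)
    (t : Fin d → ℝ) (α : Fin d → ℤ) :
    cubeNorm p ω (fun x => f (x - t)) α ≤ ENNReal.ofReal (ω t) *
      ∑ γ ∈ Finset.Icc (fun i => ⌊t i⌋) (fun i => ⌊t i⌋ + 1), cubeNorm p ω f (α - γ) := by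
  have hcover : cube α ⊆ ⋃ γ : Finset.Icc (fun i => ⌊t i⌋) (fun i => ⌊t i⌋ + 1),
      (· - t) ⁻¹' cube (α - γ) := fun x hx => by
    obtain ⟨γ, hγ, hxγ⟩ := exists_mem_Icc_sub_mem_cube hx t
    exact Set.mem_iUnion.2 ⟨⟨γ, hγ⟩, hxγ⟩
  have hω_le (x : Fin d → ℝ) : ω x ≤ ω t * ω (x - t) := by
    simpa using hω.2.2 t (x - t)
  calc cubeNorm p ω (fun x => f (x - t)) α
      ≤ ENNReal.ofReal (ω t) * eLpNorm (fun x => ω (x - t) • f (x - t)) (ENNReal.ofReal p)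
          (volume.restrict (cube α)) := by
        refine eLpNorm_le_mul_eLpNorm_of_ae_le_mul (.of_forall fun x => ?_) _
        rw [norm_smul, norm_smul, Real.norm_of_nonneg (hω.pos _).le,
          Real.norm_of_nonneg (hω.pos _).le, ← mul_assoc]
        exact mul_le_mul_of_nonneg_right (hω_le x) (norm_nonneg _)
    _ ≤ _ := by
        gcongr
        refine (eLpNorm_restrict_le_tsum hp _ hcover).trans_eq ?_
        rw [← Finset.tsum_subtype]
        exact tsum_congr fun γ =>
          eLpNorm_comp_sub_restrict_preimage _ (fun x => ω x • f x) t (measurableSet_cube _)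

end CubeNorm

section AmalgamNorm

variable {d : ℕ} {p q : ℝ} {ω : (Fin d → ℝ) → ℝ} {f g : (Fin d → ℝ) → ℂ}

theorem amalgamNorm_eq_tsum_cubeNorm :
    amalgamNorm p q ω f = (∑' α, cubeNorm p ω f α ^ q) ^ (1 / q) :=
  rfl

theorem amalgamNorm_one : amalgamNorm p 1 ω f = ∑' α, cubeNorm p ω f α := by
  simp [amalgamNorm_eq_tsum_cubeNorm]

theorem amalgamNorm_one_sub_le (hp : 1 ≤ p) (hω : Measurable ω) (hf : Measurable f)
    (hg : Measurable g) :
    amalgamNorm p 1 ω (fun x => f x - g x) ≤ amalgamNorm p 1 ω f + amalgamNorm p 1 ω g := by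
  simp only [amalgamNorm_one, ← ENNReal.tsum_add]
  exact ENNReal.tsum_le_tsum fun α => cubeNorm_sub_le hp hω hf hg

theorem eLpNorm_le_amalgamNorm_one (hp : 1 ≤ p) (hω : ∀ x, 1 ≤ ω x) (f : (Fin d → ℝ) → ℂ) :
    eLpNorm f (ENNReal.ofReal p) volume ≤ amalgamNorm p 1 ω f := by
  rw [amalgamNorm_one, ← Measure.restrict_univ (μ := volume)]
  refine (eLpNorm_restrict_le_tsum hp f iUnion_cube.ge).trans
    (ENNReal.tsum_le_tsum fun α => eLpNorm_mono fun x => ?_)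
  rw [norm_smul]
  exact le_mul_of_one_le_left (norm_nonneg _) ((hω x).trans (Real.le_norm_self _))

theorem MemAmalgam.memLp (hp : 1 ≤ p) (hω : ∀ x, 1 ≤ ω x) (hf : MemAmalgam p 1 ω f) :
    MemLp f (ENNReal.ofReal p) volume :=
  ⟨hf.1.aestronglyMeasurable, (eLpNorm_le_amalgamNorm_one hp hω f).trans_lt hf.2⟩

theorem IsBeurling.integrable_of_memAmalgam (hω : IsBeurling ω) (hp : 1 ≤ p)
    (hf : MemAmalgam p 1 ω f) : Integrable f := by
  have hf₁ : MemAmalgam 1 1 ω f := by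
    refine ⟨hf.1, lt_of_le_of_lt ?_ hf.2⟩
    simp only [amalgamNorm_one]
    exact ENNReal.tsum_le_tsum fun α => cubeNorm_mono_exponent hp hω.1 hf.1
  rw [← memLp_one_iff_integrable, ← ENNReal.ofReal_one]
  exact hf₁.memLp le_rfl hω.2.1

theorem amalgamNorm_one_lt_top_of_norm_le_cauchyKernel {D : ℝ}
    (hf : ∀ x, ‖ω x • f x‖ ≤ D * cauchyKernel x) : amalgamNorm p 1 ω f < ⊤ := by
  have hD : 0 ≤ D :=
    nonneg_of_mul_nonneg_left ((norm_nonneg _).trans (hf 0)) (cauchyKernel_pos 0)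
  have hcube (α : Fin d → ℤ) : cubeNorm p ω f α ≤
      ∫⁻ y in cube α, ENNReal.ofReal (D * 3 ^ d * cauchyKernel y) := by
    rw [← mul_one (cubeNorm p ω f α), ← measure_univ (μ := volume.restrict (cube α)),
      ← lintegral_const]
    refine setLIntegral_mono' (measurableSet_cube α) fun y hy =>
      cubeNorm_le_ofReal fun x hx => (hf x).trans ?_
    rw [mul_assoc]
    exact mul_le_mul_of_nonneg_left (cauchyKernel_le_of_mem_cube hx hy) hD
  calc amalgamNorm p 1 ω f ≤ ∫⁻ y, ENNReal.ofReal (D * 3 ^ d * cauchyKernel y) := by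
        rw [amalgamNorm_one, lintegral_eq_tsum_cube]
        exact ENNReal.tsum_le_tsum hcube
    _ < ⊤ := (integrable_cauchyKernel.const_mul _).lintegral_lt_top

theorem amalgamNorm_lt_top_of_norm_le_of_eq_zero (hq : 0 < q) {C R : ℝ}
    (hω : ∀ R, ∃ K, ∀ x, ‖x‖ ≤ R → ‖ω x‖ ≤ K) (hf : ∀ x, ‖f x‖ ≤ C)
    (hfR : ∀ x, R < ‖x‖ → f x = 0) : amalgamNorm p q ω f < ⊤ := by
  obtain ⟨K, hK⟩ := hω R
  have hbound (x : Fin d → ℝ) : ‖ω x • f x‖ ≤ |K| * C := by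
    rcases lt_or_ge R ‖x‖ with hx | hx
    · rw [hfR x hx, smul_zero, norm_zero]
      exact mul_nonneg (abs_nonneg K) ((norm_nonneg _).trans (hf x))
    · rw [norm_smul]
      exact mul_le_mul ((hK x hx).trans (le_abs_self K)) (hf x) (norm_nonneg _) (abs_nonneg K)
  have hfinite : {α : Fin d → ℤ | ‖α‖ ≤ R + 1}.Finite := by
    simpa only [Metric.closedBall, dist_zero_right] using
      (isCompact_closedBall (0 : Fin d → ℤ) (R + 1)).finite_of_discrete
  have houtside (α : Fin d → ℤ) (hα : α ∉ hfinite.toFinset) : cubeNorm p ω f α = 0 := by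
    refine cubeNorm_eq_zero fun x hx => hfR x ?_
    have hαR : R + 1 < ‖α‖ := by simpa using hα
    linarith [norm_index_le_of_mem_cube hx]
  rw [amalgamNorm_eq_tsum_cubeNorm, tsum_eq_sum fun α hα => by
    rw [houtside α hα, ENNReal.zero_rpow_of_pos hq]]
  refine ENNReal.rpow_lt_top_of_nonneg (by positivity) (ENNReal.sum_lt_top.2 fun α _ => ?_).ne
  exact ENNReal.rpow_lt_top_of_nonneg hq.le
    ((cubeNorm_le_ofReal fun x _ => hbound x).trans_lt ENNReal.ofReal_lt_top).ne

theorem tsum_sum_sub {G : Type*} [AddCommGroup G] (a : G → ℝ≥0∞) (N : Finset G) :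
    ∑' α, ∑ γ ∈ N, a (α - γ) = N.card * ∑' α, a α := by
  have htranslate (γ : G) : ∑' α, a (α - γ) = ∑' α, a α := (Equiv.subRight γ).tsum_eq a
  rw [Summable.tsum_finsetSum fun _ _ => ENNReal.summable]
  simp only [htranslate, Finset.sum_const, nsmul_eq_mul]

theorem IsBeurling.amalgamNorm_translate_le (hω : IsBeurling ω) (hp : 1 ≤ p)
    (f : (Fin d → ℝ) → ℂ) (t : Fin d → ℝ) :
    amalgamNorm p 1 ω (fun x => f (x - t)) ≤
      ENNReal.ofReal (ω t) * (2 ^ d * amalgamNorm p 1 ω f) := by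
  have hcard : (Finset.Icc (fun i => ⌊t i⌋) (fun i => ⌊t i⌋ + 1)).card = 2 ^ d := by
    simp [Pi.card_Icc, Int.card_Icc, add_assoc, add_sub_cancel_left]
  simp only [amalgamNorm_one]
  refine (ENNReal.tsum_le_tsum fun α => hω.cubeNorm_translate_le hp f t α).trans_eq ?_
  rw [ENNReal.tsum_mul_left, tsum_sum_sub (cubeNorm p ω f), hcard, Nat.cast_pow, Nat.cast_ofNat]

end AmalgamNorm

section DominatedConvergence

variable {d : ℕ} {p q : ℝ} {ω : (Fin d → ℝ) → ℝ} {f : (Fin d → ℝ) → ℂ}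
  {ι : Type*} {l : Filter ι} [l.IsCountablyGenerated]

theorem tendsto_amalgamNorm_zero_of_dominated (hq : 0 < q) {F : ι → (Fin d → ℝ) → ℂ}
    (bound : (Fin d → ℤ) → ℝ≥0∞) (hbound : ∑' α, bound α ^ q ≠ ⊤)
    (hF : ∀ᶠ n in l, ∀ α, cubeNorm p ω (F n) α ≤ bound α)
    (hlim : ∀ α, Tendsto (fun n => cubeNorm p ω (F n) α) l (𝓝 0)) :
    Tendsto (fun n => amalgamNorm p q ω (F n)) l (𝓝 0) := by
  have hpow {s : ℝ} (hs : 0 < s) : Tendsto (fun a : ℝ≥0∞ => a ^ s) (𝓝 0) (𝓝 0) := by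
    simpa [hs] using (ENNReal.continuous_rpow_const (y := s)).tendsto 0
  have hsum : Tendsto (fun n => ∑' α, cubeNorm p ω (F n) α ^ q) l (𝓝 0) := by
    simpa [lintegral_count] using tendsto_lintegral_filter_of_dominated_convergence
      (μ := Measure.count) (fun α => bound α ^ q) (.of_forall fun n => measurable_of_countable _)
      (hF.mono fun n hn => .of_forall fun α => ENNReal.rpow_le_rpow (hn α) hq.le)
      (by rwa [lintegral_count]) (.of_forall fun α => (hpow hq).comp (hlim α))
  exact (hpow (one_div_pos.2 hq)).comp hsum

theorem tendsto_amalgamNorm_zero_of_eventually_eq_zero (hq : 0 < q)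
    (hf : amalgamNorm p q ω f < ⊤) {F : ι → (Fin d → ℝ) → ℂ} {C : ℝ}
    (hF : ∀ᶠ n in l, ∀ x, ‖F n x‖ ≤ C * ‖f x‖)
    (hF₀ : ∀ R, ∀ᶠ n in l, ∀ x, ‖x‖ ≤ R → F n x = 0) :
    Tendsto (fun n => amalgamNorm p q ω (F n)) l (𝓝 0) := by
  refine tendsto_amalgamNorm_zero_of_dominated hq (fun α => ENNReal.ofReal C * cubeNorm p ω f α) ?_
    (hF.mono fun n hn α => cubeNorm_le_mul fun x _ => hn x) fun α => ?_
  · simp only [ENNReal.mul_rpow_of_nonneg _ _ hq.le, ENNReal.tsum_mul_left]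
    exact ENNReal.mul_ne_top (ENNReal.rpow_ne_top_of_nonneg hq.le ENNReal.ofReal_ne_top)
      ((ENNReal.rpow_lt_top_iff_of_pos (one_div_pos.2 hq)).1 hf).ne
  · refine tendsto_const_nhds.congr' ((hF₀ (‖α‖ + 1)).mono fun n hn => ?_)
    exact (cubeNorm_eq_zero fun x hx => hn x (norm_le_of_mem_cube hx)).symm

theorem tendsto_eLpNorm_translate_sub (hp : 1 ≤ p) (hf : MemLp f (ENNReal.ofReal p) volume) :
    Tendsto (fun t => eLpNorm (fun x => f (x - t) - f x) (ENNReal.ofReal p) volume)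
      (𝓝 0) (𝓝 0) := by
  have : Fact (1 ≤ ENNReal.ofReal p) := ⟨ENNReal.one_le_ofReal.2 hp⟩
  have : Fact (ENNReal.ofReal p ≠ ⊤) := ⟨ENNReal.ofReal_ne_top⟩
  have hcont : Continuous fun t : Fin d → ℝ => DomAddAct.mk (-t) +ᵥ hf.toLp f :=
    (DomAddAct.continuous_mk.comp continuous_neg).vadd continuous_const
  have hlim := (hcont.edist (continuous_const (y := hf.toLp f))).tendsto 0
  simp only [neg_zero, DomAddAct.mk_zero, zero_vadd, edist_self] at hlim
  refine hlim.congr fun t => ?_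
  rw [DomAddAct.mk_vadd_toLp, Lp.edist_toLp_toLp]
  congr 1
  ext x
  simp [sub_eq_neg_add]

theorem IsBeurling.cubeNorm_translate_sub_le (hω : IsBeurling ω) (hp : 1 ≤ p) (hf : Measurable f)
    {K : ℝ} (hK : ∀ x, ‖x‖ ≤ 1 → ω x ≤ K) {t : Fin d → ℝ} (ht : ‖t‖ < 1) (α : Fin d → ℤ) :
    cubeNorm p ω (fun x => f (x - t) - f x) α ≤
      ENNReal.ofReal K * ∑ γ ∈ Finset.Icc (-1) 1, cubeNorm p ω f (α - γ) + cubeNorm p ω f α := by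
  have hfloor (i : Fin d) : ⌊t i⌋ ∈ Set.Icc (-1) 0 := by
    obtain ⟨hlow, hhigh⟩ := abs_lt.1 ((norm_le_pi_norm t i).trans_lt ht)
    exact ⟨Int.le_floor.2 (by exact_mod_cast hlow.le),
      Int.lt_add_one_iff.1 (Int.floor_lt.2 (by simpa using hhigh))⟩
  have hsubset : Finset.Icc (fun i => ⌊t i⌋) (fun i => ⌊t i⌋ + 1) ⊆ Finset.Icc (-1) 1 :=
    Finset.Icc_subset_Icc (fun i => (hfloor i).1) fun i => add_le_add_left (hfloor i).2 1
  refine (cubeNorm_sub_le hp hω.1 (hf.comp (measurable_id.sub_const t)) hf).trans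
    (add_le_add_left ((hω.cubeNorm_translate_le hp f t α).trans ?_) _)
  exact mul_le_mul' (ENNReal.ofReal_le_ofReal (hK t ht.le)) (Finset.sum_le_sum_of_subset hsubset)

theorem IsBeurling.tendsto_amalgamNorm_translate_sub (hω : IsBeurling ω) (hp : 1 ≤ p)
    (hf : MemAmalgam p 1 ω f) :
    Tendsto (fun t => amalgamNorm p 1 ω fun x => f (x - t) - f x) (𝓝 0) (𝓝 0) := by
  obtain ⟨K, hK⟩ := hω.exists_le_of_norm_le 1
  have hfinite : ∑' α, cubeNorm p ω f α ≠ ⊤ := by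
    rw [← amalgamNorm_one]
    exact hf.2.ne
  refine tendsto_amalgamNorm_zero_of_dominated one_pos
    (fun α => ENNReal.ofReal K * ∑ γ ∈ Finset.Icc (-1) 1, cubeNorm p ω f (α - γ) +
      cubeNorm p ω f α) ?_ ?_ fun α => ?_
  · simp only [ENNReal.rpow_one, ENNReal.tsum_add, ENNReal.tsum_mul_left, tsum_sum_sub]
    finiteness
  · filter_upwards [Metric.ball_mem_nhds 0 one_pos] with t ht α
    exact hω.cubeNorm_translate_sub_le hp hf.1 hK (mem_ball_zero_iff.1 ht) α
  · obtain ⟨L, hL⟩ := hω.exists_le_of_norm_le (‖α‖ + 1)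
    have hlim := ENNReal.Tendsto.const_mul (a := ENNReal.ofReal L)
      (tendsto_eLpNorm_translate_sub hp (hf.memLp hp hω.2.1)) (.inr ENNReal.ofReal_ne_top)
    rw [mul_zero] at hlim
    refine tendsto_of_tendsto_of_tendsto_of_le_of_le tendsto_const_nhds hlim
      (fun _ => zero_le) fun t => cubeNorm_le_mul_eLpNorm fun x hx => ?_
    rw [Real.norm_of_nonneg (hω.pos x).le]
    exact hL x (norm_le_of_mem_cube hx)

end DominatedConvergence

section Minkowski

theorem rpow_one_div_le_of_le_mul_rpow {p q : ℝ} (hpq : p.HolderConjugate q) {I U : ℝ≥0∞}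
    (hI : I ≠ ⊤) (h : I ≤ U * I ^ (1 / q)) : I ^ (1 / p) ≤ U := by
  rcases eq_or_ne I 0 with rfl | hI₀
  · simp [hpq.pos]
  have hsplit : I ^ (1 / p) * I ^ (1 / q) = I := by
    rw [← ENNReal.rpow_add _ _ hI₀ hI, one_div, one_div, hpq.inv_add_inv_eq_one, ENNReal.rpow_one]
  refine (ENNReal.mul_le_mul_iff_left (ENNReal.rpow_pos (pos_iff_ne_zero.2 hI₀) hI).ne'
    (ENNReal.rpow_ne_top_of_nonneg hpq.symm.one_div_nonneg hI)).1 ?_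
  exact hsplit.trans_le h

variable {T X : Type*} [MeasurableSpace T] [MeasurableSpace X] {μ : Measure T} [SFinite μ]
  {ν : Measure X} {p : ℝ} {F : T → X → ℝ≥0∞}

theorem lintegral_rpow_le_of_le_lintegral [SFinite ν] (hp : 1 < p)
    (hF : Measurable (Function.uncurry F)) {G : X → ℝ≥0∞} (hG : Measurable G)
    (hGF : ∀ x, G x ≤ ∫⁻ t, F t x ∂μ) (hGp : ∫⁻ x, G x ^ p ∂ν ≠ ⊤) :
    (∫⁻ x, G x ^ p ∂ν) ^ (1 / p) ≤ ∫⁻ t, (∫⁻ x, F t x ^ p ∂ν) ^ (1 / p) ∂μ := by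
  have hpq := Real.HolderConjugate.conjExponent hp
  set q := p.conjExponent
  have hpow (x : X) : G x ^ p = G x * G x ^ (p - 1) := by
    have h := ENNReal.rpow_add_of_nonneg (x := G x) 1 (p - 1) zero_le_one (sub_nonneg.2 hp.le)
    rwa [add_sub_cancel, ENNReal.rpow_one] at h
  have hFx (x : X) : Measurable fun t => F t x := hF.comp (measurable_id.prodMk measurable_const)
  have hFG : Measurable (Function.uncurry fun x t => F t x * G x ^ (p - 1)) :=
    (hF.comp measurable_swap).mul ((hG.comp measurable_fst).pow_const _)
  refine rpow_one_div_le_of_le_mul_rpow hpq hGp ?_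
  calc ∫⁻ x, G x ^ p ∂ν ≤ ∫⁻ x, ∫⁻ t, F t x * G x ^ (p - 1) ∂μ ∂ν := by
        refine lintegral_mono fun x => ?_
        rw [hpow, lintegral_mul_const _ (hFx x)]
        exact mul_le_mul_left (hGF x) _
    _ = ∫⁻ t, ∫⁻ x, F t x * G x ^ (p - 1) ∂ν ∂μ := lintegral_lintegral_swap hFG.aemeasurable
    _ ≤ ∫⁻ t, (∫⁻ x, F t x ^ p ∂ν) ^ (1 / p) * (∫⁻ x, G x ^ p ∂ν) ^ (1 / q) ∂μ :=
        lintegral_mono fun t => ENNReal.lintegral_mul_rpow_le_lintegral_rpow_mul_lintegral_rpow hpq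
          (hF.comp (measurable_const.prodMk measurable_id)).aemeasurable hG.aemeasurable
    _ = (∫⁻ t, (∫⁻ x, F t x ^ p ∂ν) ^ (1 / p) ∂μ) * (∫⁻ x, G x ^ p ∂ν) ^ (1 / q) :=
        lintegral_mul_const _ ((hF.pow_const p).lintegral_prod_right'.pow_const _)

theorem tendsto_lintegral_min_natCast_rpow (hp : 0 ≤ p) {H : X → ℝ≥0∞} (hH : Measurable H) :
    Tendsto (fun k : ℕ => ∫⁻ x, min (H x) k ^ p ∂ν) atTop (𝓝 (∫⁻ x, H x ^ p ∂ν)) := by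
  refine lintegral_tendsto_of_tendsto_of_monotone
    (fun k => ((hH.min measurable_const).pow_const p).aemeasurable)
    (.of_forall fun x k m hkm => by dsimp only; gcongr) (.of_forall fun x => ?_)
  refine (ENNReal.continuous_rpow_const.tendsto _).comp ?_
  simpa using (tendsto_const_nhds (x := H x)).min ENNReal.tendsto_nat_nhds_top

/-- The inner integral is truncated at `k`, so that Hölder's inequality leaves a finite power of it
to divide by. -/
theorem lintegral_lintegral_rpow_le [IsFiniteMeasure ν] (hp : 1 ≤ p)
    (hF : Measurable (Function.uncurry F)) :
    (∫⁻ x, (∫⁻ t, F t x ∂μ) ^ p ∂ν) ^ (1 / p) ≤ ∫⁻ t, (∫⁻ x, F t x ^ p ∂ν) ^ (1 / p) ∂μ := by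
  rcases hp.eq_or_lt with rfl | hp₁
  · simp only [ENNReal.rpow_one, one_div, inv_one]
    exact (lintegral_lintegral_swap hF.aemeasurable).ge
  have hp₀ : 0 ≤ p := zero_le_one.trans hp
  have hH : Measurable fun x => ∫⁻ t, F t x ∂μ := (hF.comp measurable_swap).lintegral_prod_right'
  have hfinite (k : ℕ) : ∫⁻ x, min (∫⁻ t, F t x ∂μ) k ^ p ∂ν ≠ ⊤ := by
    refine ne_top_of_le_ne_top (b := ∫⁻ _, (k : ℝ≥0∞) ^ p ∂ν) ?_
      (lintegral_mono fun x => ENNReal.rpow_le_rpow (min_le_right _ _) hp₀)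
    rw [lintegral_const]
    exact ENNReal.mul_ne_top (ENNReal.rpow_ne_top_of_nonneg hp₀ (ENNReal.natCast_ne_top k))
      (measure_ne_top _ _)
  exact le_of_tendsto'
    ((ENNReal.continuous_rpow_const.tendsto _).comp (tendsto_lintegral_min_natCast_rpow hp₀ hH))
    fun k => lintegral_rpow_le_of_le_lintegral hp₁ hF (hH.min measurable_const)
      (fun x => min_le_left _ _) (hfinite k)

end Minkowski

section Approximation

variable {d : ℕ} {p q : ℝ} {ω : (Fin d → ℝ) → ℝ} {f h : (Fin d → ℝ) → ℂ} {c : ℝ}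

theorem measurable_cubeNorm_translate_sub (hp : 0 < p) (hω : Measurable ω) (hf : Measurable f)
    (c : ℝ) (α : Fin d → ℤ) :
    Measurable fun t => cubeNorm p ω (fun x => f (x - c • t) - f x) α := by
  simp only [cubeNorm, eLpNorm_ofReal_eq_lintegral hp]
  refine (Measurable.lintegral_prod_right' (f := fun z : (Fin d → ℝ) × (Fin d → ℝ) =>
    ‖ω z.2 • (f (z.2 - c • z.1) - f z.2)‖ₑ ^ p) ?_).pow_const _
  fun_prop

theorem enorm_convF_dilate_sub_le (hf : Measurable f) (hh : Measurable h) (hhi : Integrable h)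
    (hh₁ : ∫ y, h y = 1) (hc : 0 < c) (x : Fin d → ℝ) :
    ‖convF (dilate c h) f x - f x‖ₑ ≤ ∫⁻ y, ‖h y‖ₑ * ‖f (x - c⁻¹ • y) - f x‖ₑ := by
  simp only [← enorm_mul]
  by_cases hint : Integrable fun y => h y * (f (x - c⁻¹ • y) - f x)
  · have hconst : Integrable fun y => h y * f x := hhi.mul_const _
    have hconv : Integrable fun y => h y * f (x - c⁻¹ • y) :=
      (hint.add hconst).congr (.of_forall fun y => by simp only [Pi.add_apply]; ring)
    have hdiff : ∫ y, h y * (f (x - c⁻¹ • y) - f x) = convF (dilate c h) f x - f x := by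
      simp only [mul_sub]
      rw [integral_sub hconv hconst, integral_mul_const, hh₁, one_mul, convF_dilate hc]
    rw [← hdiff]
    exact enorm_integral_le_lintegral_enorm _
  · have hmeas : AEStronglyMeasurable fun y => h y * (f (x - c⁻¹ • y) - f x) :=
      Measurable.aestronglyMeasurable (by fun_prop)
    have htop : ∫⁻ y, ‖h y * (f (x - c⁻¹ • y) - f x)‖ₑ = ⊤ :=
      not_lt_top_iff.1 fun hlt => hint ⟨hmeas, hlt⟩
    exact htop ▸ le_top

theorem cubeNorm_convF_dilate_sub_le (hp : 1 ≤ p) (hω : Measurable ω) (hf : Measurable f)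
    (hh : Measurable h) (hhi : Integrable h) (hh₁ : ∫ y, h y = 1) (hc : 0 < c) (α : Fin d → ℤ) :
    cubeNorm p ω (fun x => convF (dilate c h) f x - f x) α ≤
      ∫⁻ y, ‖h y‖ₑ * cubeNorm p ω (fun x => f (x - c⁻¹ • y) - f x) α := by
  have hp₀ : 0 < p := zero_lt_one.trans_le hp
  have hpointwise (x : Fin d → ℝ) : ‖ω x • (convF (dilate c h) f x - f x)‖ₑ ≤
      ∫⁻ y, ‖h y‖ₑ * ‖ω x • (f (x - c⁻¹ • y) - f x)‖ₑ := by
    simp only [enorm_smul, mul_left_comm _ ‖ω x‖ₑ]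
    rw [lintegral_const_mul' _ _ enorm_ne_top]
    exact mul_le_mul_right (enorm_convF_dilate_sub_le hf hh hhi hh₁ hc x) _
  simp only [cubeNorm, eLpNorm_ofReal_eq_lintegral hp₀]
  calc (∫⁻ x in cube α, ‖ω x • (convF (dilate c h) f x - f x)‖ₑ ^ p) ^ (1 / p)
      ≤ (∫⁻ x in cube α, (∫⁻ y, ‖h y‖ₑ * ‖ω x • (f (x - c⁻¹ • y) - f x)‖ₑ) ^ p) ^ (1 / p) := by
        gcongr with x
        exact hpointwise x
    _ ≤ ∫⁻ y, (∫⁻ x in cube α, (‖h y‖ₑ * ‖ω x • (f (x - c⁻¹ • y) - f x)‖ₑ) ^ p) ^ (1 / p) :=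
        lintegral_lintegral_rpow_le hp (by simp only [Function.uncurry_def]; fun_prop)
    _ = ∫⁻ y, ‖h y‖ₑ * (∫⁻ x in cube α, ‖ω x • (f (x - c⁻¹ • y) - f x)‖ₑ ^ p) ^ (1 / p) := by
        refine lintegral_congr fun y => ?_
        simp only [ENNReal.mul_rpow_of_nonneg _ _ hp₀.le]
        rw [lintegral_const_mul' _ _ (ENNReal.rpow_ne_top_of_nonneg hp₀.le enorm_ne_top),
          ENNReal.mul_rpow_of_nonneg _ _ (by positivity), one_div, ENNReal.rpow_rpow_inv hp₀.ne']

theorem amalgamNorm_convF_dilate_sub_le (hp : 1 ≤ p) (hω : Measurable ω) (hf : Measurable f)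
    (hh : Measurable h) (hhi : Integrable h) (hh₁ : ∫ y, h y = 1) (hc : 0 < c) :
    amalgamNorm p 1 ω (fun x => convF (dilate c h) f x - f x) ≤
      ∫⁻ y, ‖h y‖ₑ * amalgamNorm p 1 ω (fun x => f (x - c⁻¹ • y) - f x) := by
  have hmeas (α : Fin d → ℤ) : AEMeasurable fun y =>
      ‖h y‖ₑ * cubeNorm p ω (fun x => f (x - c⁻¹ • y) - f x) α :=
    (hh.enorm.mul
      (measurable_cubeNorm_translate_sub (zero_lt_one.trans_le hp) hω hf c⁻¹ α)).aemeasurable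
  simp only [amalgamNorm_one, ← ENNReal.tsum_mul_left]
  rw [lintegral_tsum hmeas]
  exact ENNReal.tsum_le_tsum fun α => cubeNorm_convF_dilate_sub_le hp hω hf hh hhi hh₁ hc α

namespace IsBandLimitedWindow

variable {R D : ℝ}

theorem memAmalgam_dilate (hω : ∀ x, 0 ≤ ω x) (hh : IsBandLimitedWindow ω R D h) (hc : 1 ≤ c) :
    MemAmalgam p 1 ω (dilate c h) :=
  ⟨measurable_dilate hh.measurable c,
    amalgamNorm_one_lt_top_of_norm_le_cauchyKernel (hh.norm_smul_dilate_le hω hc)⟩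

theorem enorm_mul_amalgamNorm_translate_sub_le (hω : IsBeurling ω)
    (hh : IsBandLimitedWindow ω R D h) (hp : 1 ≤ p) (hf : Measurable f) (hc : 1 ≤ c)
    (y : Fin d → ℝ) :
    ‖h y‖ₑ * amalgamNorm p 1 ω (fun x => f (x - c⁻¹ • y) - f x) ≤
      ENNReal.ofReal (D * cauchyKernel y) * ((2 ^ d + 1) * amalgamNorm p 1 ω f) := by
  have hshrink (i : Fin d) : |(c⁻¹ • y) i| ≤ |y i| := by
    rw [Pi.smul_apply, smul_eq_mul, abs_mul, abs_of_nonneg (by positivity)]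
    exact mul_le_of_le_one_left (abs_nonneg _) (inv_le_one_of_one_le₀ hc)
  have hdecay : ‖h y‖ₑ * ENNReal.ofReal (ω (c⁻¹ • y)) ≤ ENNReal.ofReal (D * cauchyKernel y) := by
    rw [← ofReal_norm, ← ENNReal.ofReal_mul (norm_nonneg _)]
    exact ENNReal.ofReal_le_ofReal (hh.norm_mul_le _ y hshrink)
  have htranslate : amalgamNorm p 1 ω (fun x => f (x - c⁻¹ • y) - f x) ≤
      ENNReal.ofReal (ω (c⁻¹ • y)) * ((2 ^ d + 1) * amalgamNorm p 1 ω f) := by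
    refine (amalgamNorm_one_sub_le hp hω.1 (hf.comp (measurable_id.sub_const _)) hf).trans ?_
    rw [add_mul, one_mul, mul_add]
    exact add_le_add (hω.amalgamNorm_translate_le hp f _)
      (le_mul_of_one_le_left' (ENNReal.one_le_ofReal.2 (hω.2.1 _)))
  refine (mul_le_mul_right htranslate _).trans ?_
  rw [← mul_assoc]
  exact mul_le_mul_left hdecay _

theorem tendsto_amalgamNorm_convF_dilate_sub (hω : IsBeurling ω)
    (hh : IsBandLimitedWindow ω R D h) (hp : 1 ≤ p) (hf : MemAmalgam p 1 ω f) :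
    Tendsto (fun c => amalgamNorm p 1 ω fun x => convF (dilate c h) f x - f x) atTop (𝓝 0) := by
  have hlim : Tendsto
      (fun c : ℝ => ∫⁻ y, ‖h y‖ₑ * amalgamNorm p 1 ω (fun x => f (x - c⁻¹ • y) - f x))
      atTop (𝓝 (∫⁻ _ : Fin d → ℝ, 0)) := by
    refine tendsto_lintegral_filter_of_dominated_convergence
      (fun y => ENNReal.ofReal (D * cauchyKernel y) * ((2 ^ d + 1) * amalgamNorm p 1 ω f))
      (.of_forall fun c => hh.measurable.enorm.mul ?_) ?_ ?_ (.of_forall fun y => ?_)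
    · simp only [amalgamNorm_one]
      exact Measurable.tsum fun α =>
        measurable_cubeNorm_translate_sub (zero_lt_one.trans_le hp) hω.1 hf.1 c⁻¹ α
    · filter_upwards [eventually_ge_atTop 1] with c hc
      exact .of_forall (hh.enorm_mul_amalgamNorm_translate_sub_le hω hp hf.1 hc)
    · have hfinite := hf.2.ne
      rw [lintegral_mul_const' _ _ (by finiteness)]
      exact ENNReal.mul_ne_top (integrable_cauchyKernel.const_mul D).lintegral_lt_top.ne
        (by finiteness)
    · have hshift : Tendsto (fun c : ℝ => c⁻¹ • y) atTop (𝓝 0) := by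
        simpa using (tendsto_inv_atTop_zero (𝕜 := ℝ)).smul_const y
      simpa using ENNReal.Tendsto.const_mul (a := ‖h y‖ₑ)
        ((hω.tendsto_amalgamNorm_translate_sub hp hf).comp hshift) (.inr enorm_ne_top)
  rw [lintegral_zero] at hlim
  refine tendsto_of_tendsto_of_tendsto_of_le_of_le' tendsto_const_nhds hlim
    (.of_forall fun _ => zero_le) ?_
  filter_upwards [eventually_gt_atTop 0] with c hc
  exact amalgamNorm_convF_dilate_sub_le hp hω.1 hf.1 hh.measurable (hh.integrable hω.2.1)
    hh.integral_eq_one hc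

end IsBandLimitedWindow

end Approximation

section FourierSide

namespace IsBandLimitedWindow

variable {d : ℕ} {p q R D c : ℝ} {ϑ ω : (Fin d → ℝ) → ℝ} {f h : (Fin d → ℝ) → ℂ}

theorem hasCompactSupport_fourierT_dilate (hh : IsBandLimitedWindow ϑ R D h) (hc : 0 < c) :
    HasCompactSupport (fourierT (dilate c h)) :=
  .intro (isCompact_closedBall 0 (c * R)) fun ξ hξ =>
    hh.fourierT_dilate_eq_zero hc (by simpa using hξ)

theorem memAmalgam_fourierT_dilate (hϑ : ∀ x, 1 ≤ ϑ x) (hh : IsBandLimitedWindow ϑ R D h)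
    (hq : 0 < q) (hω : ∀ R, ∃ K, ∀ x, ‖x‖ ≤ R → ‖ω x‖ ≤ K) (hc : 0 < c) :
    MemAmalgam p q ω (fourierT (dilate c h)) :=
  ⟨(continuous_fourierT (integrable_dilate hc.ne' (hh.integrable hϑ))).measurable,
    amalgamNorm_lt_top_of_norm_le_of_eq_zero hq hω (norm_fourierT_dilate_le hc h)
      fun _ => hh.fourierT_dilate_eq_zero hc⟩

theorem fourierT_convF_dilate_sub (hϑ : ∀ x, 1 ≤ ϑ x) (hh : IsBandLimitedWindow ϑ R D h)
    (hf : Integrable f) (hc : 0 < c) (ξ : Fin d → ℝ) :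
    fourierT (fun x => convF (dilate c h) f x - f x) ξ =
      (fourierT (dilate c h) ξ - 1) * fourierT f ξ := by
  have hhc := integrable_dilate hc.ne' (hh.integrable hϑ)
  rw [fourierT_sub (integrable_convF hhc hf) hf, fourierT_convF hhc hf, sub_mul, one_mul]

theorem tendsto_amalgamNorm_fourierT_convF_dilate_sub (hϑ : ∀ x, 1 ≤ ϑ x)
    (hh : IsBandLimitedWindow ϑ R D h) (hq : 0 < q) (hf : Integrable f)
    (hf' : amalgamNorm p q ω (fourierT f) < ⊤) :
    Tendsto (fun c => amalgamNorm p q ω (fourierT fun x => convF (dilate c h) f x - f x))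
      atTop (𝓝 0) := by
  refine tendsto_amalgamNorm_zero_of_eventually_eq_zero (C := (∫ y, ‖h y‖) + 1) hq hf' ?_
    fun S => ?_
  · filter_upwards [eventually_gt_atTop 0] with c hc ξ
    rw [hh.fourierT_convF_dilate_sub hϑ hf hc, norm_mul]
    gcongr
    simpa using norm_sub_le_of_le (norm_fourierT_dilate_le hc h ξ) (norm_one (α := ℂ)).le
  · filter_upwards [eventually_gt_atTop 0, eventually_ge_atTop S] with c hc hSc ξ hξ
    rw [hh.fourierT_convF_dilate_sub hϑ hf hc, hh.fourierT_dilate_eq_one hc (hξ.trans hSc),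
      sub_self, zero_mul]

end IsBandLimitedWindow

end FourierSide

theorem A_approximate_unit_general {d : ℕ} {p q r : ℝ} (hp : 1 ≤ p) (_hq : 0 < q) (hr : 0 < r)
    {ϑ₁ ϑ₂ : (Fin d → ℝ) → ℝ} (hϑ₁ : IsBeurling ϑ₁)
    (hϑ₂ : ∀ R, ∃ K, ∀ x, ‖x‖ ≤ R → ‖ϑ₂ x‖ ≤ K) (hBD : BeurlingDomar ϑ₁)
    {f : (Fin d → ℝ) → ℂ} (hf : MemA p q r ϑ₁ ϑ₂ f) {ε : ℝ} (hε : 0 < ε) :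
    ∃ h : (Fin d → ℝ) → ℂ, MemA p q r ϑ₁ ϑ₂ h ∧ HasCompactSupport (fourierT h) ∧
      ANorm p q r ϑ₁ ϑ₂ (fun x => convF h f x - f x) < ENNReal.ofReal ε := by
  obtain ⟨R, D, h, hh⟩ := hϑ₁.exists_isBandLimitedWindow hBD
  have hlim : Tendsto (fun c => ANorm p q r ϑ₁ ϑ₂ fun x => convF (dilate c h) f x - f x)
      atTop (𝓝 0) := by
    simpa only [ANorm, add_zero] using
      (hh.tendsto_amalgamNorm_convF_dilate_sub hϑ₁ hp hf.1).add
        (hh.tendsto_amalgamNorm_fourierT_convF_dilate_sub hϑ₁.2.1 hr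
          (hϑ₁.integrable_of_memAmalgam hp hf.1) hf.2.2)
  obtain ⟨c, hclose, hc⟩ := ((hlim.eventually_lt_const (ENNReal.ofReal_pos.2 hε)).and
    (eventually_ge_atTop 1)).exists
  have hc₀ : 0 < c := zero_lt_one.trans_le hc
  exact ⟨dilate c h, ⟨hh.memAmalgam_dilate (fun x => (hϑ₁.pos x).le) hc,
    hh.memAmalgam_fourierT_dilate hϑ₁.2.1 hr hϑ₂ hc₀⟩,
    hh.hasCompactSupport_fourierT_dilate hc₀, hclose⟩

/-- if `ϑ₁` satisfies the Beurling–Domar condition then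
`A^{p,1,q,r}_{ϑ₁,ϑ₂}(ℝ^d)` has an approximate unit with compactly supported
Fourier transforms. -/
theorem A_approximate_unit {d : ℕ} (p q r : ℝ) (hp : 1 ≤ p) (hq : 1 ≤ q) (hr : 1 ≤ r)
    (ϑ₁ ϑ₂ : (Fin d → ℝ) → ℝ) (h1 : IsBeurling ϑ₁) (h2 : IsBeurling ϑ₂)
    (hBD : BeurlingDomar ϑ₁)
    (f : (Fin d → ℝ) → ℂ) (hf : MemA p q r ϑ₁ ϑ₂ f) (ε : ℝ) (hε : 0 < ε) :
    ∃ h : (Fin d → ℝ) → ℂ, MemA p q r ϑ₁ ϑ₂ h ∧ HasCompactSupport (fourierT h) ∧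
      ANorm p q r ϑ₁ ϑ₂ (fun x => convF h f x - f x) < ENNReal.ofReal ε :=
  A_approximate_unit_general hp (zero_lt_one.trans_le hq) (zero_lt_one.trans_le hr) h1
    (fun R => (h2.exists_le_of_norm_le R).imp fun _ hK x hx =>
      (Real.norm_of_nonneg (h2.pos x).le).trans_le (hK x hx)) hBD hf hε
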